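/- arXiv:2012.15065 — 3 statements merged into one kernel-verified Lean document; each statement's English description precedes it below -/
import Mathlib

section
/- For m = 7, the form P_7(x₁) + P_7(x₂) + P_7(x₃) + P_7(x₄) (sum of four generalized heptagonal numbers) is universal, i.e., every positive integer is a sum of four generalized heptagonal numbers, while P_7(x₁) + P_7(x₂) + P_7(x₃) does not represent 10. -/
/-- The generalized `m`-gonal number `P_m(x) = ((m-2)x² - (m-4)x)/2`. -/
def polygonal (m x : ℤ) : ℤ := ((m - 2) * x ^ 2 - (m - 4) * x) / 2

/-- A positive definite integral ternary form of determinant one, with matrix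
`[[a, t, s], [t, b, r], [s, r, c]]`, that represents `n`. -/
def TForm (n a b c r s t : ℤ) : Prop :=
  0 < a ∧ 0 < a * b - t ^ 2 ∧
  a * b * c + 2 * r * s * t - a * r ^ 2 - b * s ^ 2 - c * t ^ 2 = 1 ∧
  ∃ x y z : ℤ, a * x ^ 2 + b * y ^ 2 + c * z ^ 2 + 2 * r * (y * z) + 2 * s * (x * z)
    + 2 * t * (x * y) = n

theorem TForm.swap_xy {n a b c r s t : ℤ} (h : TForm n a b c r s t) : TForm n b a c s r t := by
  obtain ⟨h1, h2, h3, x, y, z, h4⟩ := h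
  refine ⟨?_, by linarith, by linarith, y, x, z, by linarith⟩
  by_contra hb
  push Not at hb
  nlinarith [sq_nonneg t, mul_nonneg h1.le (sub_nonneg.2 hb)]

theorem TForm.swap_yz {n a b c r s t : ℤ} (h : TForm n a b c r s t) : TForm n a c b r t s := by
  obtain ⟨h1, h2, h3, x, y, z, h4⟩ := h
  refine ⟨h1, ?_, by linarith, x, z, y, by linarith⟩
  have key : (a * b - t ^ 2) * (a * c - s ^ 2) = a + (a * r - s * t) ^ 2 := by
    linear_combination a * h3
  by_contra hb
  push Not at hb
  nlinarith [sq_nonneg (a * r - s * t), mul_nonneg h2.le (sub_nonneg.2 hb)]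

theorem TForm.shift_xy {n a b c r s t : ℤ} (k : ℤ) (h : TForm n a b c r s t) :
    TForm n a (b + 2 * k * t + k ^ 2 * a) c (r + k * s) s (t + k * a) := by
  obtain ⟨h1, h2, h3, x, y, z, h4⟩ := h
  refine ⟨h1, ?_, ?_, x - k * y, y, z, ?_⟩
  · convert h2 using 1
    ring
  · rw [← h3]
    ring
  · rw [← h4]
    ring

theorem TForm.shift_yz {n a b c r s t : ℤ} (k : ℤ) (h : TForm n a b c r s t) :
    TForm n a b (c + 2 * k * r + k ^ 2 * b) (r + k * b) (s + k * t) t := by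
  obtain ⟨h1, h2, h3, x, y, z, h4⟩ := h
  refine ⟨h1, h2, ?_, x, y - k * z, z, ?_⟩
  · rw [← h3]
    ring
  · rw [← h4]
    ring

theorem exists_shift (t a : ℤ) (ha : 0 < a) : ∃ k : ℤ, |2 * (t + k * a)| ≤ a := by
  refine ⟨-((2 * t + a) / (2 * a)), ?_⟩
  have h1 := Int.emod_add_mul_ediv (2 * t + a) (2 * a)
  have h2 := Int.emod_nonneg (2 * t + a) (show 2 * a ≠ 0 by omega)
  have h3 := Int.emod_lt_of_pos (2 * t + a) (show 0 < 2 * a by omega)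
  rw [abs_le]
  constructor <;> nlinarith

/-- Gauss reduction of a positive ternary form of determinant one. -/
theorem TForm.sum_three_squares {n a b c r s t : ℤ} (h : TForm n a b c r s t) :
    ∃ u v w : ℤ, u ^ 2 + v ^ 2 + w ^ 2 = n := by
  classical
  -- minimal leading coefficient
  have hex : ∃ A : ℕ, ∃ b c r s t : ℤ, TForm n A b c r s t := by
    refine ⟨a.toNat, b, c, r, s, t, ?_⟩
    rw [Int.toNat_of_nonneg h.1.le]
    exact h
  obtain ⟨b, c, r, s, t, h⟩ := Nat.find_spec hex
  have hminA : ∀ a' b c r s t : ℤ, TForm n a' b c r s t → ((Nat.find hex : ℕ) : ℤ) ≤ a' := by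
    intro a' b c r s t h'
    have := Nat.find_min' hex (m := a'.toNat) ⟨b, c, r, s, t, by
      rw [Int.toNat_of_nonneg h'.1.le]
      exact h'⟩
    have h0 := h'.1
    omega
  generalize ((Nat.find hex : ℕ) : ℤ) = a at h hminA
  -- minimal leading coefficient of the adjoint binary form
  have hex2 : ∃ G : ℕ, ∃ b c r s t : ℤ, TForm n a b c r s t ∧ a * b - t ^ 2 = G := by
    refine ⟨(a * b - t ^ 2).toNat, b, c, r, s, t, h, ?_⟩
    rw [Int.toNat_of_nonneg h.2.1.le]
  obtain ⟨b, c, r, s, t, h, hG⟩ := Nat.find_spec hex2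
  have hminG : ∀ b c r s t : ℤ, TForm n a b c r s t →
      ((Nat.find hex2 : ℕ) : ℤ) ≤ a * b - t ^ 2 := by
    intro b c r s t h'
    have := Nat.find_min' hex2 (m := (a * b - t ^ 2).toNat) ⟨b, c, r, s, t, h', by
      rw [Int.toNat_of_nonneg h'.2.1.le]⟩
    have h0 := h'.2.1
    omega
  generalize ((Nat.find hex2 : ℕ) : ℤ) = G at hG hminG
  have hGpos : 0 < G := hG ▸ h.2.1
  -- normalise the off-diagonal terms
  obtain ⟨k, hk⟩ := exists_shift (a * r - s * t) G hGpos
  have h' := h.shift_yz k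
  have hk' : |2 * (a * (r + k * b) - (s + k * t) * t)| ≤ G := by
    convert hk using 3
    rw [← hG]
    ring
  clear hk h
  generalize c + 2 * k * r + k ^ 2 * b = c at h'
  generalize r + k * b = r at h' hk'
  generalize s + k * t = s at h' hk'
  obtain ⟨l, hl⟩ := exists_shift t a h'.1
  have h := h'.shift_xy l
  have hk : |2 * (a * (r + l * s) - s * (t + l * a))| ≤ G := by
    convert hk' using 3
    ring
  have hG2 : a * (b + 2 * l * t + l ^ 2 * a) - (t + l * a) ^ 2 = G := by
    rw [← hG]
    ring
  clear hk' h' hG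
  generalize b + 2 * l * t + l ^ 2 * a = b at h hG2
  generalize r + l * s = r at h hk
  generalize t + l * a = t at h hk hl hG2
  have hab : a ≤ b := hminA _ _ _ _ _ _ h.swap_xy
  have hGG : G ≤ a * c - s ^ 2 := hminG _ _ _ _ _ h.swap_yz
  obtain ⟨ha, -, hdet, x, y, z, hn⟩ := h
  have key : G * (a * c - s ^ 2) = a + (a * r - s * t) ^ 2 := by
    rw [← hG2]
    linear_combination a * hdet
  have hk2 : (2 * (a * r - s * t)) ^ 2 ≤ G ^ 2 := sq_le_sq' (abs_le.1 hk).1 (abs_le.1 hk).2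
  have hl2 : (2 * t) ^ 2 ≤ a ^ 2 := sq_le_sq' (abs_le.1 hl).1 (abs_le.1 hl).2
  have i1 : 3 * G ^ 2 ≤ 4 * a := by nlinarith [mul_le_mul_of_nonneg_left hGG hGpos.le]
  have i2 : 3 * a ^ 2 ≤ 4 * G := by nlinarith [mul_le_mul_of_nonneg_left hab ha.le]
  have ha1 : a = 1 := by
    have : a < 2 := by
      by_contra hh
      push Not at hh
      rcases le_total a G with q | q <;> nlinarith
    omega
  subst ha1
  have hG1 : G = 1 := by
    have : G < 2 := by nlinarith
    omega
  subst hG1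
  have ht : t = 0 := by
    have := abs_le.1 hl
    omega
  subst ht
  have hr : r = 0 := by
    have := abs_le.1 hk
    omega
  subst hr
  refine ⟨x + s * z, y, z, ?_⟩
  rw [← hn]
  linear_combination (-y ^ 2 - z ^ 2 * 0) * hG2 - z ^ 2 * key

theorem sum_three_squares_of_mod_eight (n : ℕ) (hn : n % 8 = 3) :
    ∃ u v w : ℤ, u ^ 2 + v ^ 2 + w ^ 2 = n := by
  obtain ⟨m, hm⟩ : ∃ m, n = 2 * m + 1 := ⟨n / 2, by omega⟩
  have hcop : m.Coprime (4 * n) := by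
    have h2 : Nat.Coprime m 2 := by
      rw [Nat.coprime_two_right, Nat.odd_iff]
      omega
    have h4 : Nat.Coprime m 4 := by
      have := h2.mul_right h2
      simpa using this
    refine h4.mul_right ?_
    rw [hm]
    simp
  obtain ⟨p, hpm, hp, hmod⟩ := Nat.forall_exists_prime_gt_and_modEq (m + 2) (q := 4 * n)
    (by omega) hcop
  obtain ⟨j, hj⟩ : ∃ j, p = 4 * n * j + m := by
    obtain ⟨j, hj⟩ := (Nat.modEq_iff_dvd' (by omega)).1 hmod.symm
    exact ⟨j, by omega⟩
  haveI : Fact p.Prime := ⟨hp⟩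
  have hpd : 2 * p + 1 = (8 * j + 1) * n := by
    rw [hj, hm]
    ring
  have hp4 : p % 4 = 1 := by
    rw [hj, mul_assoc, Nat.mul_add_mod]
    omega
  have hodd : Odd p := by
    rw [Nat.odd_iff]
    omega
  set d := 8 * j + 1 with hd
  have hdodd : Odd d := by
    rw [Nat.odd_iff]
    omega
  -- `-d` is a square modulo `p`
  have hJ : jacobiSym (-(d : ℤ)) p = 1 := by
    rw [jacobiSym.neg _ hodd, ZMod.χ₄_nat_one_mod_four hp4, one_mul,
      jacobiSym.quadratic_reciprocity_one_mod_four' hdodd hp4]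
    have h2 : jacobiSym 2 d = 1 := by
      rw [jacobiSym.at_two hdodd, ZMod.χ₈_nat_eq_if_mod_eight]
      have e1 : d % 2 = 1 := by omega
      have e2 : d % 8 = 1 := by omega
      simp [e1, e2]
    have h2p : jacobiSym (2 * (p : ℤ)) d = 1 := by
      have : jacobiSym (2 * (p : ℤ)) d = jacobiSym (-1) d := by
        apply jacobiSym.mod_left'
        apply Int.ModEq.symm
        rw [Int.modEq_iff_dvd]
        refine ⟨n, ?_⟩
        have : (2 * (p : ℤ) + 1) = d * n := by exact_mod_cast hpd
        linarith
      rw [this, jacobiSym.at_neg_one hdodd, ZMod.χ₄_nat_one_mod_four (by omega)]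
    rw [jacobiSym.mul_left, h2, one_mul] at h2p
    exact h2p
  obtain ⟨y, hy⟩ := ZMod.isSquare_of_jacobiSym_eq_one hJ
  obtain ⟨e, he, heo⟩ : ∃ e : ℤ, (p : ℤ) ∣ e ^ 2 + d ∧ e % 2 = 1 := by
    have h0 : (p : ℤ) ∣ (y.val : ℤ) ^ 2 + d := by
      rw [← ZMod.intCast_zmod_eq_zero_iff_dvd _ p] <;> try infer_instance
      push_cast at hy ⊢
      rw [ZMod.natCast_zmod_val, sq, ← hy]
      ring
    rcases Int.emod_two_eq_zero_or_one (y.val : ℤ) with q | q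
    · refine ⟨y.val + p, ?_, by omega⟩
      have : ((y.val : ℤ) + p) ^ 2 + d = ((y.val : ℤ) ^ 2 + d) + p * (2 * y.val + p) := by ring
      rw [this]
      exact dvd_add h0 (dvd_mul_right _ _)
    · exact ⟨_, h0, q⟩
  have h2dvd : (2 : ℤ) ∣ e ^ 2 + d := by
    have hdo : (d : ℤ) % 2 = 1 := by omega
    obtain ⟨e', rfl⟩ : ∃ e', e = 2 * e' + 1 := ⟨e / 2, by omega⟩
    obtain ⟨d', hd'⟩ : ∃ d', (d : ℤ) = 2 * d' + 1 := ⟨d / 2, by omega⟩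
    rw [hd']
    exact ⟨2 * e' ^ 2 + 2 * e' + 1 + d', by ring⟩
  have hcop2 : IsCoprime (2 : ℤ) p := by
    rw [show (2 : ℤ) = ((2 : ℕ) : ℤ) by rfl, Nat.isCoprime_iff_coprime, Nat.coprime_two_left]
    exact hodd
  obtain ⟨g, hg⟩ := hcop2.mul_dvd h2dvd he
  have hpd' : (2 * (p : ℤ) + 1) = d * n := by exact_mod_cast hpd
  have hdpos : (0 : ℤ) < d := by omega
  have hppos : (0 : ℤ) < p := by exact_mod_cast hp.pos
  have hT : TForm n g (2 * p) n 0 1 e := by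
    refine ⟨?_, ?_, ?_, 0, 0, 1, by ring⟩
    · by_contra hh
      push Not at hh
      nlinarith [sq_nonneg e]
    · linarith
    · linear_combination (-(n : ℤ)) * hg - hpd'
  exact hT.sum_three_squares

theorem odd_of_three_squares {u v w : ℤ} (h : (u ^ 2 + v ^ 2 + w ^ 2) % 8 = 3) :
    u % 2 = 1 ∧ v % 2 = 1 ∧ w % 2 = 1 := by
  have aux : ∀ x : ℤ, (x % 2 = 1 ∧ x ^ 2 % 8 = 1) ∨ (x % 2 = 0 ∧ (x ^ 2 % 8 = 0 ∨ x ^ 2 % 8 = 4)) := by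
    intro x
    have h8 : x % 8 = 0 ∨ x % 8 = 1 ∨ x % 8 = 2 ∨ x % 8 = 3 ∨ x % 8 = 4 ∨ x % 8 = 5 ∨
      x % 8 = 6 ∨ x % 8 = 7 := by omega
    rcases h8 with q | q | q | q | q | q | q | q <;> simp [pow_two, Int.mul_emod, q] <;> omega
  have := aux u
  have := aux v
  have := aux w
  omega

/-- A version of Cauchy's lemma. -/
theorem cauchy_lemma {a b : ℤ} (ha : a % 2 = 1) (hb : b % 2 = 1) (hab : b ^ 2 < 4 * a) :
    ∃ x y z w : ℤ, x + y + z + w = b ∧ x ^ 2 + y ^ 2 + z ^ 2 + w ^ 2 = a := by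
  have hb8 : b ^ 2 % 8 = 1 := by
    have h8 : b % 8 = 1 ∨ b % 8 = 3 ∨ b % 8 = 5 ∨ b % 8 = 7 := by omega
    rcases h8 with q | q | q | q <;> simp [pow_two, Int.mul_emod, q]
  obtain ⟨u, v, w, h⟩ := sum_three_squares_of_mod_eight (4 * a - b ^ 2).toNat (by omega)
  rw [Int.toNat_of_nonneg (by omega)] at h
  obtain ⟨hu, hv, hw⟩ := odd_of_three_squares (u := u) (v := v) (w := w) (by omega)
  obtain ⟨w', hw', hsq, h4⟩ : ∃ w' : ℤ, w' % 2 = 1 ∧ w' ^ 2 = w ^ 2 ∧ (b + u + v + w') % 4 = 0 := by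
    by_cases q : (b + u + v + w) % 4 = 0
    · exact ⟨w, hw, rfl, q⟩
    · exact ⟨-w, by omega, by ring, by omega⟩
  obtain ⟨x, hx⟩ : ∃ x, b + u + v + w' = 4 * x := ⟨(b + u + v + w') / 4, by omega⟩
  obtain ⟨y, hy⟩ : ∃ x, b + u - v - w' = 4 * x := ⟨(b + u - v - w') / 4, by omega⟩
  obtain ⟨z, hz⟩ : ∃ x, b - u + v - w' = 4 * x := ⟨(b - u + v - w') / 4, by omega⟩
  obtain ⟨t, ht⟩ : ∃ x, b - u - v + w' = 4 * x := ⟨(b - u - v + w') / 4, by omega⟩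
  refine ⟨x, y, z, t, by omega, ?_⟩
  have e : (4 * x) ^ 2 + (4 * y) ^ 2 + (4 * z) ^ 2 + (4 * t) ^ 2 = 16 * a := by
    rw [← hx, ← hy, ← hz, ← ht]
    linear_combination 4 * h + 4 * hsq
  linarith

theorem two_mul_polygonal_seven (x : ℤ) : 2 * polygonal 7 x = 5 * x ^ 2 - 3 * x := by
  have h : (5 * x ^ 2 - 3 * x) % 2 = 0 := by
    rcases Int.emod_two_eq_zero_or_one x with q | q <;>
      simp [pow_two, Int.sub_emod, Int.mul_emod, q]
  have e : polygonal 7 x = (5 * x ^ 2 - 3 * x) / 2 := by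
    unfold polygonal
    norm_num
  omega

theorem four_heptagonal_large (N b : ℤ) (hN : 24 ≤ N) (hb : b % 2 = 1) (hb5 : (b - N) % 5 = 0)
    (h1 : -5 ≤ b) (h2 : b ≤ 5) :
    ∃ x₁ x₂ x₃ x₄ : ℤ,
      polygonal 7 x₁ + polygonal 7 x₂ + polygonal 7 x₃ + polygonal 7 x₄ = N := by
  obtain ⟨a, ha⟩ : ∃ a, 2 * N + 3 * b = 5 * a := ⟨(2 * N + 3 * b) / 5, by omega⟩
  obtain ⟨x, y, z, w, hs, hq⟩ := cauchy_lemma (a := a) (b := b) (by omega) hb (by nlinarith)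
  refine ⟨x, y, z, w, ?_⟩
  linarith [two_mul_polygonal_seven x, two_mul_polygonal_seven y, two_mul_polygonal_seven z,
    two_mul_polygonal_seven w]

theorem four_heptagonal_universal :
    (∀ N : ℤ, 0 < N →
      ∃ x₁ x₂ x₃ x₄ : ℤ,
        polygonal 7 x₁ + polygonal 7 x₂ + polygonal 7 x₃ + polygonal 7 x₄ = N) ∧
    ¬ ∃ x₁ x₂ x₃ : ℤ,
        polygonal 7 x₁ + polygonal 7 x₂ + polygonal 7 x₃ = 10 := by
  refine ⟨fun N hN => ?_, ?_⟩
  · by_cases hN' : 25 ≤ N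
    · obtain ⟨b, hb⟩ : ∃ b : ℤ, b % 2 = 1 ∧ (b - N) % 5 = 0 ∧ -5 ≤ b ∧ b ≤ 5 :=
        ⟨(6 * N) % 10 - 5, by omega⟩
      exact four_heptagonal_large N b (by omega) hb.1 hb.2.1 hb.2.2.1 hb.2.2.2
    push Not at hN'
    interval_cases N
    · exact ⟨0, 0, 0, 1, by decide⟩
    · exact ⟨0, 0, 1, 1, by decide⟩
    · exact ⟨0, 1, 1, 1, by decide⟩
    · exact ⟨0, 0, 0, -1, by decide⟩
    · exact ⟨0, 0, 1, -1, by decide⟩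
    · exact ⟨0, 1, 1, -1, by decide⟩
    · exact ⟨0, 0, 0, 2, by decide⟩
    · exact ⟨0, 0, 1, 2, by decide⟩
    · exact ⟨0, 1, 1, 2, by decide⟩
    · exact ⟨1, 1, 1, 2, by decide⟩
    · exact ⟨0, 0, -1, 2, by decide⟩
    · exact ⟨0, 1, -1, 2, by decide⟩
    · exact ⟨0, 0, 0, -2, by decide⟩
    · exact ⟨0, 0, 1, -2, by decide⟩
    · exact ⟨0, 1, 1, -2, by decide⟩
    · exact ⟨1, 1, 1, -2, by decide⟩
    · exact ⟨0, 0, -1, -2, by decide⟩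
    · exact ⟨0, 0, 0, 3, by decide⟩
    · exact ⟨0, 0, 1, 3, by decide⟩
    · exact ⟨0, 0, 2, -2, by decide⟩
    · exact ⟨0, 1, 2, -2, by decide⟩
    · exact ⟨0, 0, -1, 3, by decide⟩
    · exact ⟨0, 1, -1, 3, by decide⟩
    · exact ⟨0, -1, 2, -2, by decide⟩
  · rintro ⟨x, y, z, h⟩
    have nonneg : ∀ x : ℤ, 0 ≤ polygonal 7 x := by
      intro x
      have := two_mul_polygonal_seven x
      rcases le_or_gt x 0 with q | q <;> nlinarith
    have bd : ∀ x : ℤ, polygonal 7 x ≤ 10 →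
        polygonal 7 x = 0 ∨ polygonal 7 x = 1 ∨ polygonal 7 x = 4 ∨ polygonal 7 x = 7 := by
      intro x hx
      have h2 := two_mul_polygonal_seven x
      have l : -2 < x := by nlinarith
      have u : x < 3 := by nlinarith
      interval_cases x <;> omega
    have hx := nonneg x
    have hy := nonneg y
    have hz := nonneg z
    have bx := bd x (by omega)
    have bY := bd y (by omega)
    have bz := bd z (by omega)
    omega
end

section
/- Let m ≥ 12 be an integer. Then the m-gonal form P_m(x₁) + 2P_m(x₂) + 2P_m(x₃) + ⋯ + 2P_m(x_n) with n = ⌊m/2⌋ variables (one coefficient 1 and n-1 coefficients 2) is universal, and no such form with fewer than ⌊m/2⌋ variables is universal; in particular any form ⟨1,2,2,…,2⟩_m representing m-2 must have rank at least ⌊m/2⌋. -/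
/-- The form `⟨1,2,…,2⟩_m` with `n` variables: one coefficient `1` and `n-1`
coefficients `2`. -/
def oneTwoForm (m : ℤ) (n : ℕ) (x : Fin n → ℤ) : ℤ :=
  ∑ k : Fin n, (if (k : ℕ) = 0 then 1 else 2) * polygonal m (x k)

/-- The pair `(a,b)` is represented by the six-variable core. -/
def Rep6 (a b : ℤ) : Prop := ∃ x1 x2 x3 x4 x5 x6 : ℤ,
  x1 + 2 * (x2 + x3 + x4 + x5 + x6) = b ∧
  x1 ^ 2 + 2 * (x2 ^ 2 + x3 ^ 2 + x4 ^ 2 + x5 ^ 2 + x6 ^ 2) = 2 * a + b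

lemma two_polygonal (m x : ℤ) : 2 * polygonal m x = (m - 2) * (x ^ 2 - x) + 2 * x := by
  unfold polygonal
  have h : (m - 2) * x ^ 2 - (m - 4) * x = (m - 2) * (x * (x - 1)) + 2 * x := by ring
  obtain ⟨k, hk⟩ : (2 : ℤ) ∣ x * (x - 1) := by
    rcases Int.even_or_odd' x with ⟨c, hc | hc⟩
    · exact ⟨c * (x - 1), by rw [hc]; ring⟩
    · exact ⟨x * c, by rw [hc]; ring⟩
  have h2 : (m - 2) * x ^ 2 - (m - 4) * x = 2 * ((m - 2) * k + x) := by
    rw [h, hk]; ring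
  rw [h2, Int.mul_ediv_cancel_left _ (by norm_num)]
  linear_combination (-(m - 2)) * hk

lemma form_snoc (m : ℤ) (n : ℕ) (hn : 1 ≤ n) (x : Fin n → ℤ) (y : ℤ) :
    oneTwoForm m (n + 1) (Fin.snoc x y) = oneTwoForm m n x + 2 * polygonal m y := by
  unfold oneTwoForm
  rw [Fin.sum_univ_castSucc]
  have : n ≠ 0 := by omega
  simp [this]

lemma polygonal_zero (m : ℤ) : polygonal m 0 = 0 := by
  have := two_polygonal m 0; linarith

lemma polygonal_one (m : ℤ) : polygonal m 1 = 1 := by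
  have := two_polygonal m 1; linarith

lemma extend (m N : ℤ) (h j : ℕ) (hj : j ≤ h)
    (H : ∃ x : Fin 6 → ℤ, oneTwoForm m 6 x = N) :
    ∃ x : Fin (6 + h) → ℤ, oneTwoForm m (6 + h) x = N + 2 * j := by
  induction h generalizing j with
  | zero =>
    obtain rfl : j = 0 := by omega
    simpa using H
  | succ h ih =>
    rcases Nat.eq_zero_or_pos j with rfl | hj0
    · obtain ⟨x, hx⟩ := ih 0 (by omega)
      exact ⟨Fin.snoc x 0, by
        refine (form_snoc m (6 + h) (by omega) x _).trans ?_; rw [hx, polygonal_zero]; ring⟩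
    · obtain ⟨x, hx⟩ := ih (j - 1) (by omega)
      refine ⟨Fin.snoc x 1, ?_⟩
      refine (form_snoc m (6 + h) (by omega) x _).trans ?_; rw [hx, polygonal_one]
      push_cast [Nat.cast_sub hj0]; ring

lemma rep6_form (m a b : ℤ) (H : Rep6 a b) :
    ∃ x : Fin 6 → ℤ, oneTwoForm m 6 x = (m - 2) * a + b := by
  obtain ⟨x1, x2, x3, x4, x5, x6, h1, h2⟩ := H
  refine ⟨![x1, x2, x3, x4, x5, x6], ?_⟩
  simp [oneTwoForm, Fin.sum_univ_succ]
  have e1 := two_polygonal m x1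
  have e2 := two_polygonal m x2
  have e3 := two_polygonal m x3
  have e4 := two_polygonal m x4
  have e5 := two_polygonal m x5
  have e6 := two_polygonal m x6
  have : 2 * (polygonal m x1 + 2 * polygonal m x2 + 2 * polygonal m x3 + 2 * polygonal m x4
      + 2 * polygonal m x5 + 2 * polygonal m x6) = 2 * ((m - 2) * a + b) := by
    linear_combination e1 + 2 * e2 + 2 * e3 + 2 * e4 + 2 * e5 + 2 * e6 + (m - 2) * h2 - (m - 2) * h1 + 2 * h1
  linarith

/-- Four squares with the first one odd, or all of them even. -/
lemma four_sq_odd (K : ℤ) (hK : 0 ≤ K) :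
    ∃ w p q r : ℤ, w ^ 2 + p ^ 2 + q ^ 2 + r ^ 2 = K ∧ (w % 2 = 1 ∨
      (w % 2 = 0 ∧ p % 2 = 0 ∧ q % 2 = 0 ∧ r % 2 = 0)) := by
  obtain ⟨a, b, c, d, h⟩ := Nat.sum_four_squares K.toNat
  have h' : (a : ℤ) ^ 2 + b ^ 2 + c ^ 2 + d ^ 2 = K := by
    have : ((a ^ 2 + b ^ 2 + c ^ 2 + d ^ 2 : ℕ) : ℤ) = K := by rw [h]; omega
    push_cast at this; exact this
  by_cases ha : (a : ℤ) % 2 = 1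
  · exact ⟨a, b, c, d, h', Or.inl ha⟩
  by_cases hb : (b : ℤ) % 2 = 1
  · exact ⟨b, a, c, d, by linarith, Or.inl hb⟩
  by_cases hc : (c : ℤ) % 2 = 1
  · exact ⟨c, a, b, d, by linarith, Or.inl hc⟩
  by_cases hd : (d : ℤ) % 2 = 1
  · exact ⟨d, a, b, c, by linarith, Or.inl hd⟩
  exact ⟨a, b, c, d, h', Or.inr (by omega)⟩

/-- If `8 ∤ K`, then `K` is a sum of four squares, the first one odd
(if `K ≡ 4 mod 8` use four odd squares). -/
lemma four_sq_odd' (K : ℤ) (hK : 0 ≤ K) (h8 : K % 8 ≠ 0) :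
    ∃ w p q r : ℤ, w ^ 2 + p ^ 2 + q ^ 2 + r ^ 2 = K ∧ w % 2 = 1 := by
  obtain ⟨w, p, q, r, h, hw | ⟨hw, hp, hq, hr⟩⟩ := four_sq_odd K hK
  · exact ⟨w, p, q, r, h, hw⟩
  · obtain ⟨w, rfl⟩ : ∃ v, w = 2 * v := ⟨w / 2, by omega⟩
    obtain ⟨p, rfl⟩ : ∃ v, p = 2 * v := ⟨p / 2, by omega⟩
    obtain ⟨q, rfl⟩ : ∃ v, q = 2 * v := ⟨q / 2, by omega⟩
    obtain ⟨r, rfl⟩ : ∃ v, r = 2 * v := ⟨r / 2, by omega⟩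
    refine ⟨w + p + q + r, w + p - q - r, w - p + q - r, w - p - q + r, by linarith, ?_⟩
    by_contra hne
    apply h8
    obtain ⟨s, hs⟩ : ∃ s, w + p + q + r = 2 * s := ⟨(w + p + q + r) / 2, by omega⟩
    have hw : w = 2 * s - p - q - r := by linarith
    have : K = 8 * (2 * s ^ 2 - 2 * s * (p + q + r) + p ^ 2 + q ^ 2 + r ^ 2 + p * q + p * r + q * r) := by
      rw [← h, hw]; ring
    omega

lemma rep6_core (a b β K : ℤ) (hβ : (b - β) % 4 = 2)
    (hK : 4 * K = 4 * a + 2 * b - b ^ 2 + 6 * b * β - 11 * β ^ 2)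
    (h0 : 0 ≤ K) (h8 : K % 8 ≠ 0) : Rep6 a b := by
  obtain ⟨w, p, q, r, h, hw⟩ := four_sq_odd' K h0 h8
  obtain ⟨g, hg⟩ : ∃ g, b = β + 4 * g + 2 := ⟨(b - β) / 4, by omega⟩
  obtain ⟨w', hw', t, ht, u, hu⟩ : ∃ w' : ℤ, w' ^ 2 = w ^ 2 ∧ ∃ t, 2 * t = w' + (2 * g + 1) ∧
      ∃ u, t + p + q + r = 2 * u := by
    by_cases hh : ((w + (2 * g + 1)) / 2 + p + q + r) % 2 = 0
    · exact ⟨w, rfl, (w + (2 * g + 1)) / 2, by omega, ((w + (2 * g + 1)) / 2 + p + q + r) / 2, by omega⟩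
    · exact ⟨-w, by ring, (-w + (2 * g + 1)) / 2, by omega,
        ((-w + (2 * g + 1)) / 2 + p + q + r) / 2, by omega⟩
  have hw2 : w' = 2 * t - (2 * g + 1) := by linarith
  have ht2 : t = 2 * u - p - q - r := by linarith
  refine ⟨b - 2 * β - 2 * t, u, t + p - u, t + q - u, t + r - u, β - t, ?_, ?_⟩
  · linarith
  · rw [← h, ← hw', hw2, ht2, hg] at hK
    rw [ht2, hg]
    linarith

lemma rep6_large (a b : ℤ) (ha : 23 ≤ a) (hb1 : -11 ≤ b) (hb2 : b ≤ 21)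
    (hgood : (2 * a - 3 * b ^ 2 - 15 * b - 22) % 16 ≠ 0) : Rep6 a b := by
  have key : ∀ b ∈ Finset.Icc (-11 : ℤ) 21, ∃ β ∈ Finset.Icc (-6 : ℤ) 9, (b - β) % 4 = 2 ∧
      0 ≤ 92 + 2 * b - b ^ 2 + 6 * b * β - 11 * β ^ 2 ∧
      (2 * b - b ^ 2 + 6 * b * β - 11 * β ^ 2 + 2 * (3 * b ^ 2 + 15 * b + 22)) % 32 = 0 := by
    decide +kernel
  obtain ⟨β, -, h1, h2, h3⟩ := key b (Finset.mem_Icc.2 ⟨hb1, hb2⟩)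
  have h4 : 2 ∣ 3 * b ^ 2 + 15 * b + 22 := by
    rcases Int.even_or_odd' b with ⟨c, hc | hc⟩
    · exact ⟨6 * c ^ 2 + 15 * c + 11, by rw [hc]; ring⟩
    · exact ⟨6 * c ^ 2 + 21 * c + 20, by rw [hc]; ring⟩
  refine rep6_core a b β ((4 * a + 2 * b - b ^ 2 + 6 * b * β - 11 * β ^ 2) / 4) h1 ?_ ?_ ?_ <;>
  · generalize 6 * b * β = X at *
    generalize β ^ 2 = Y at *
    generalize b ^ 2 = Z at *
    omega

def boxSearch (a b : ℤ) : Bool :=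
  let L : List ℤ := [-3, -2, -1, 0, 1, 2, 3, 4]
  L.any fun x2 => L.any fun x3 => decide (x2 ≤ x3) && L.any fun x4 => decide (x3 ≤ x4) &&
    L.any fun x5 => decide (x4 ≤ x5) && [(0 : ℤ), 1, 2].any fun x6 =>
      decide ((b - 2 * (x2 + x3 + x4 + x5 + x6)) ^ 2 +
        2 * (x2 ^ 2 + x3 ^ 2 + x4 ^ 2 + x5 ^ 2 + x6 ^ 2) = 2 * a + b)

lemma boxSearch_sound (a b : ℤ) (h : boxSearch a b = true) : Rep6 a b := by
  unfold boxSearch at h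
  simp only [List.any_eq_true, Bool.and_eq_true, decide_eq_true_eq] at h
  obtain ⟨x2, -, x3, -, -, x4, -, -, x5, -, -, x6, -, h⟩ := h
  exact ⟨_, x2, x3, x4, x5, x6, by ring, h⟩

lemma rep6_small (a b : ℤ) (ha : 2 ≤ a) (ha' : a ≤ 23) (hb : 0 ≤ b) (hb' : b ≤ 10) : Rep6 a b := by
  have key : ∀ a ∈ Finset.Icc (2 : ℤ) 23, ∀ b ∈ Finset.Icc (0 : ℤ) 10, boxSearch a b = true := by
    decide +kernel
  exact boxSearch_sound a b (key a (Finset.mem_Icc.2 ⟨ha, ha'⟩) b (Finset.mem_Icc.2 ⟨hb, hb'⟩))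

lemma rep6_zero (b : ℤ) (hb : 0 ≤ b) (hb' : b ≤ 11) : Rep6 0 b := by
  have key : ∀ b ∈ Finset.Icc (0 : ℤ) 11, boxSearch 0 b = true := by decide +kernel
  exact boxSearch_sound 0 b (key b (Finset.mem_Icc.2 ⟨hb, hb'⟩))

lemma rep6_one (b : ℤ) (hb : 1 ≤ b) (hb' : b ≤ 10) : Rep6 1 b := by
  have key : ∀ b ∈ Finset.Icc (1 : ℤ) 10, boxSearch 1 b = true := by decide +kernel
  exact boxSearch_sound 1 b (key b (Finset.mem_Icc.2 ⟨hb, hb'⟩))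

/-- Every `N > 0` decomposes as `A a + b + 2 j` with `(a,b)` represented by the core. -/
lemma decomp (A : ℤ) (h : ℕ) (hh : (h : ℤ) = A / 2 - 5) (N : ℤ) (hN : 0 < N) :
    ∃ a b : ℤ, ∃ j : ℕ, j ≤ h ∧ Rep6 a b ∧ A * a + b + 2 * j = N := by
  have hA : 10 ≤ A := by omega
  obtain ⟨a, r, hr0, hrA, hNar⟩ : ∃ a r : ℤ, 0 ≤ r ∧ r < A ∧ A * a + r = N :=
    ⟨N / A, N % A, Int.emod_nonneg _ (by omega), Int.emod_lt_of_pos _ (by omega),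
      Int.mul_ediv_add_emod N A⟩
  have ha0 : 0 ≤ a := by
    by_contra hneg
    have : A * a ≤ A * (-1) := mul_le_mul_of_nonneg_left (by omega) (by omega)
    omega
  -- decomposition of `r`
  obtain ⟨b, j, hb0, hb10, hj, hbr, hb1⟩ : ∃ b : ℤ, ∃ j : ℕ, 0 ≤ b ∧ b ≤ 10 ∧ j ≤ h ∧
      b + 2 * j = r ∧ (1 ≤ r → 1 ≤ b) := by
    by_cases h1 : r ≤ 10
    · exact ⟨r, 0, by omega, by omega, by omega, by omega, by omega⟩
    · exact ⟨9 + (r - 9) % 2, ((r - 9) / 2).toNat, by omega, by omega, by omega, by omega, by omega⟩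
  rcases (show a = 0 ∨ a = 1 ∨ (2 ≤ a ∧ a ≤ 23) ∨ 24 ≤ a by omega) with rfl | rfl | ⟨h2, h23⟩ | h24
  · exact ⟨0, b, j, hj, rep6_zero b hb0 (by omega), by omega⟩
  · by_cases hr : 1 ≤ r
    · exact ⟨1, b, j, hj, rep6_one b (hb1 hr) hb10, by omega⟩
    · exact ⟨0, 10 + A % 2, h, le_rfl, rep6_zero _ (by omega) (by omega), by omega⟩
  · exact ⟨a, b, j, hj, rep6_small a b h2 h23 hb0 hb10, by omega⟩
  · by_cases hgood : (2 * a - 3 * b ^ 2 - 15 * b - 22) % 16 ≠ 0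
    · exact ⟨a, b, j, hj, rep6_large a b (by omega) (by omega) (by omega) hgood, by omega⟩
    push Not at hgood
    by_cases hjh : j < h
    · refine ⟨a, b - 2, j + 1, hjh, rep6_large a _ (by omega) (by omega) (by omega) ?_, by
        push_cast; omega⟩
      have : (b - 2) ^ 2 = b ^ 2 - 4 * b + 4 := by ring
      rw [this]; omega
    by_cases hj0 : 0 < j
    · refine ⟨a, b + 2, j - 1, by omega, rep6_large a _ (by omega) (by omega) (by omega) ?_, by
        push_cast [Nat.cast_sub hj0]; omega⟩
      have : (b + 2) ^ 2 = b ^ 2 + 4 * b + 4 := by ring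
      rw [this]; omega
    obtain rfl : j = 0 := by omega
    have hA2 : A = 10 ∨ A = 11 := by omega
    rcases hA2 with rfl | rfl
    · by_cases hb : b % 4 = 1
      · refine ⟨a + 1, b - 10, 0, by omega, rep6_large _ _ (by omega) (by omega) (by omega) ?_, by
          push_cast; omega⟩
        have : (b - 10) ^ 2 = b ^ 2 - 20 * b + 100 := by ring
        rw [this]; omega
      · refine ⟨a - 1, b + 10, 0, by omega, rep6_large _ _ (by omega) (by omega) (by omega) ?_, by
          push_cast; omega⟩
        have : (b + 10) ^ 2 = b ^ 2 + 20 * b + 100 := by ring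
        rw [this]; omega
    · by_cases hb : b % 8 = 7
      · refine ⟨a + 1, b - 11, 0, by omega, rep6_large _ _ (by omega) (by omega) (by omega) ?_, by
          push_cast; omega⟩
        have : (b - 11) ^ 2 = b ^ 2 - 22 * b + 121 := by ring
        rw [this]; omega
      · refine ⟨a - 1, b + 11, 0, by omega, rep6_large _ _ (by omega) (by omega) (by omega) ?_, by
          push_cast; omega⟩
        have : (b + 11) ^ 2 = b ^ 2 + 22 * b + 121 := by ring
        rw [this]; omega

lemma polygonal_cases (m x : ℤ) (hm : 12 ≤ m) :
    polygonal m x = 0 ∨ polygonal m x = 1 ∨ polygonal m x = m - 3 ∨ m ≤ polygonal m x := by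
  have h := two_polygonal m x
  rcases (show x = 0 ∨ x = 1 ∨ x = -1 ∨ 2 ≤ x ∨ x ≤ -2 by omega) with rfl | rfl | rfl | hx | hx
  · left; linarith
  · right; left; linarith
  · right; right; left; linarith
  · right; right; right
    nlinarith [mul_nonneg (show 0 ≤ m - 2 by omega) (show 0 ≤ (x - 2) * (x + 1) by nlinarith)]
  · right; right; right
    have : 0 ≤ (-2 - x) * (3 - x) := mul_nonneg (by omega) (by omega)
    nlinarith [mul_nonneg (show 0 ≤ m - 3 by omega) this]

lemma lower (m : ℤ) (hm : 12 ≤ m) (n' : ℕ) (x : Fin n' → ℤ)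
    (hx : oneTwoForm m n' x = m - 2) : m / 2 ≤ n' := by
  cases n' with
  | zero => simp [oneTwoForm] at hx; omega
  | succ k =>
    unfold oneTwoForm at hx
    rw [Fin.sum_univ_succ] at hx
    simp only [Fin.val_zero, Fin.val_succ, if_true, Nat.succ_ne_zero, if_false, one_mul,
      ← Finset.mul_sum] at hx
    set S := ∑ i : Fin k, polygonal m (x i.succ) with hS
    have hnn : ∀ y, 0 ≤ polygonal m y := fun y => by
      have := polygonal_cases m y hm; omega
    have hle : ∀ i : Fin k, polygonal m (x i.succ) ≤ S := fun i =>
      Finset.single_le_sum (f := fun i : Fin k => polygonal m (x i.succ))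
        (fun i _ => hnn _) (Finset.mem_univ i)
    have h0 := polygonal_cases m (x 0) hm
    have hS0 : 0 ≤ S := Finset.sum_nonneg fun i _ => hnn _
    have hSk : S ≤ k := by
      have h1 : ∀ i ∈ Finset.univ, polygonal m (x (Fin.succ i)) ≤ (1 : ℤ) := fun i _ => by
        have h1 := polygonal_cases m (x (Fin.succ i)) hm
        have h2 := hle i
        have h3 := hnn (x 0)
        omega
      have := Finset.sum_le_sum h1
      simpa [hS] using this
    push_cast
    omega

theorem ell_m_two_one (m : ℤ) (hm : 12 ≤ m) (n : ℕ) (hn : (n : ℤ) = m / 2) :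
    (∀ N : ℤ, 0 < N → ∃ x : Fin n → ℤ, oneTwoForm m n x = N) ∧
    (∀ n' : ℕ, n' < n →
      ¬ (∀ N : ℤ, 0 < N → ∃ x : Fin n' → ℤ, oneTwoForm m n' x = N)) ∧
    (∀ n' : ℕ, (∃ x : Fin n' → ℤ, oneTwoForm m n' x = m - 2) → n ≤ n') := by
  have low : ∀ n' : ℕ, (∃ x : Fin n' → ℤ, oneTwoForm m n' x = m - 2) → n ≤ n' := by
    rintro n' ⟨x, hx⟩
    have := lower m hm n' x hx
    omega
  refine ⟨?_, ?_, low⟩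
  · intro N hN
    obtain ⟨h, rfl⟩ : ∃ h, n = 6 + h := ⟨n - 6, by omega⟩
    obtain ⟨a, b, j, hj, hrep, heq⟩ := decomp (m - 2) h (by push_cast at hn; omega) N hN
    rw [← heq]
    exact extend m _ h j hj (rep6_form m a b hrep)
  · intro n' hn' H
    have := low n' (H (m - 2) (by omega))
    omega
end

section
/- Let m ≥ 3 and let F₁, F₂, F₃, … be the Fibonacci sequence with F₁ = F₂ = 1, F₃ = 2, F₄ = 3, F₅ = 5, etc. If n ≥ 5 and F₁ + F₂ + ⋯ + Fₙ ≥ m - 4, then the m-gonal form F₁P_m(x₁) + F₂P_m(x₂) + ⋯ + FₙP_m(xₙ) is universal. -/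
/-- Centered remainder: any integer can be moved into `[-A/2, A/2]` by a multiple of `A`. -/
lemma exists_shift_s17 (A B : ℤ) (hA : 0 < A) : ∃ h : ℤ, 4 * (B + A * h) ^ 2 ≤ A ^ 2 := by
  refine ⟨-((2 * B + A) / (2 * A)), ?_⟩
  have h1 := Int.emod_add_mul_ediv (2 * B + A) (2 * A)
  have h2 := Int.emod_nonneg (2 * B + A) (show (2 * A) ≠ 0 by omega)
  have h3 := Int.emod_lt_of_pos (2 * B + A) (show 0 < 2 * A by omega)
  set q := (2 * B + A) / (2 * A)
  have h4 : -A ≤ 2 * (B + A * -q) := by nlinarith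
  have h5 : 2 * (B + A * -q) ≤ A := by nlinarith
  nlinarith

/-- Gauss reduction of positive binary forms. -/
lemma bin_red (k : ℕ) : ∀ A B C : ℤ, 0 < A → A ≤ k → 0 < A * C - B ^ 2 →
    ∃ p q r s : ℤ, p * s - q * r = 1 ∧ 0 < A * p ^ 2 + 2 * B * p * r + C * r ^ 2 ∧
      3 * (A * p ^ 2 + 2 * B * p * r + C * r ^ 2) ^ 2 ≤ 4 * (A * C - B ^ 2) := by
  induction k with
  | zero => intro A B C h1 h2; exfalso; simp at h2; omega
  | succ k ih =>
    intro A B C hA hk hD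
    obtain ⟨h, hh⟩ := exists_shift_s17 A B hA
    have hid : A * (C + 2 * B * h + A * h ^ 2) = (A * C - B ^ 2) + (B + A * h) ^ 2 := by ring
    by_cases hC : A ≤ C + 2 * B * h + A * h ^ 2
    · refine ⟨1, 0, 0, 1, by ring, by linarith, ?_⟩
      have : A * A ≤ A * (C + 2 * B * h + A * h ^ 2) := by
        apply mul_le_mul_of_nonneg_left hC hA.le
      nlinarith
    · push Not at hC
      have hpos : 0 < C + 2 * B * h + A * h ^ 2 := by
        by_contra hcon
        push Not at hcon
        nlinarith [sq_nonneg (B + A * h), mul_nonneg hA.le (neg_nonneg.mpr hcon)]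
      obtain ⟨p, q, r, s, h1, h2, h3⟩ := ih (C + 2 * B * h + A * h ^ 2) (-(B + A * h)) A hpos
        (by push_cast at hk; omega) (by nlinarith)
      have e : A * (-r + h * p) ^ 2 + 2 * B * (-r + h * p) * p + C * p ^ 2 =
        (C + 2 * B * h + A * h ^ 2) * p ^ 2 + 2 * (-(B + A * h)) * p * r + A * r ^ 2 := by ring
      refine ⟨-r + h * p, -s + h * q, p, q, by linarith, by rw [e]; exact h2, ?_⟩
      rw [e]
      calc _ ≤ _ := h3
        _ = _ := by ring

lemma tern_one (b c d e f : ℤ) (h1 : 0 < b - f ^ 2)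
    (hdet : b * c + 2 * d * e * f - d ^ 2 - b * e ^ 2 - c * f ^ 2 = 1) (x y z : ℤ) :
    ∃ u v w : ℤ, x ^ 2 + b * y ^ 2 + c * z ^ 2 + 2 * d * y * z + 2 * e * x * z + 2 * f * x * y
      = u ^ 2 + v ^ 2 + w ^ 2 := by
  have hD : (b - f ^ 2) * (c - e ^ 2) - (d - e * f) ^ 2 = 1 := by linarith
  obtain ⟨p, q, r, s, hu, hg, h3⟩ := bin_red (b - f ^ 2).toNat (b - f ^ 2) (d - e * f) (c - e ^ 2) h1
    (by omega) (by omega)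
  set A := b - f ^ 2 with hA
  set B := d - e * f with hB
  set C := c - e ^ 2 with hC
  set g := A * p ^ 2 + 2 * B * p * r + C * r ^ 2 with hgdef
  have hg1 : g = 1 := by nlinarith
  set m := A * p * q + B * (p * s + q * r) + C * r * s with hm
  set l := A * q ^ 2 + 2 * B * q * s + C * s ^ 2 with hl
  have hl1 : l = m ^ 2 + 1 := by
    have : g * l - m ^ 2 = (A * C - B ^ 2) * (p * s - q * r) ^ 2 := by
      rw [hgdef, hl, hm]; ring
    rw [hg1, hD, hu] at this; linarith
  refine ⟨x + f * y + e * z, (s * y - q * z) + m * (-r * y + p * z), -r * y + p * z, ?_⟩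
  have e1 : x ^ 2 + b * y ^ 2 + c * z ^ 2 + 2 * d * y * z + 2 * e * x * z + 2 * f * x * y
      = (x + f * y + e * z) ^ 2 + (A * y ^ 2 + 2 * B * y * z + C * z ^ 2) := by
    rw [hA, hB, hC]; ring
  have e2 : (p * s - q * r) ^ 2 * (A * y ^ 2 + 2 * B * y * z + C * z ^ 2) =
      g * (s * y - q * z) ^ 2 + 2 * m * (s * y - q * z) * (-r * y + p * z)
        + l * (-r * y + p * z) ^ 2 := by
    rw [hgdef, hl, hm]; ring
  rw [hu, hg1, hl1] at e2
  rw [e1]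
  linear_combination e2

/-- A positive ternary form of determinant one only takes values that are sums of three squares. -/
lemma tern (k : ℕ) : ∀ a b c d e f : ℤ, 0 < a → a ≤ k → 0 < a * b - f ^ 2 →
    a * b * c + 2 * d * e * f - a * d ^ 2 - b * e ^ 2 - c * f ^ 2 = 1 → ∀ x y z : ℤ,
    ∃ u v w : ℤ, a * x ^ 2 + b * y ^ 2 + c * z ^ 2 + 2 * d * y * z + 2 * e * x * z + 2 * f * x * y
      = u ^ 2 + v ^ 2 + w ^ 2 := by
  induction k with
  | zero => intro a b c d e f h1 h2; exfalso; simp at h2; omega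
  | succ k ih =>
    intro a b c d e f ha hk hm hdet x y z
    have hG : (a * b - f ^ 2) * (a * c - e ^ 2) - (a * d - e * f) ^ 2 = a := by
      linear_combination a * hdet
    obtain ⟨p, q, r, s, hu, hg, h3⟩ := bin_red (a * b - f ^ 2).toNat (a * b - f ^ 2)
      (a * d - e * f) (a * c - e ^ 2) hm (by omega) (by omega)
    rw [hG] at h3
    obtain ⟨f', hf'⟩ : ∃ t, t = f * p + e * r := ⟨_, rfl⟩
    obtain ⟨e', he'⟩ : ∃ t, t = f * q + e * s := ⟨_, rfl⟩
    obtain ⟨b', hb'⟩ : ∃ t, t = b * p ^ 2 + 2 * d * p * r + c * r ^ 2 := ⟨_, rfl⟩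
    obtain ⟨c', hc'⟩ : ∃ t, t = b * q ^ 2 + 2 * d * q * s + c * s ^ 2 := ⟨_, rfl⟩
    obtain ⟨d', hd'⟩ : ∃ t, t = b * p * q + d * (p * s + q * r) + c * r * s := ⟨_, rfl⟩
    have hg' : (a * b - f ^ 2) * p ^ 2 + 2 * (a * d - e * f) * p * r + (a * c - e ^ 2) * r ^ 2
        = a * b' - f' ^ 2 := by subst hf' hb'; ring
    rw [hg'] at hg h3
    have hdet' : a * b' * c' + 2 * d' * e' * f' - a * d' ^ 2 - b' * e' ^ 2 - c' * f' ^ 2 = 1 := by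
      have : a * b' * c' + 2 * d' * e' * f' - a * d' ^ 2 - b' * e' ^ 2 - c' * f' ^ 2 =
        (a * b * c + 2 * d * e * f - a * d ^ 2 - b * e ^ 2 - c * f ^ 2) * (p * s - q * r) ^ 2 := by
        subst hf' he' hb' hc' hd'; ring
      rw [this, hdet, hu]; norm_num
    -- reduce to the primed form
    suffices H : ∀ x y z : ℤ, ∃ u v w : ℤ, a * x ^ 2 + b' * y ^ 2 + c' * z ^ 2 + 2 * d' * y * z
        + 2 * e' * x * z + 2 * f' * x * y = u ^ 2 + v ^ 2 + w ^ 2 by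
      obtain ⟨u, v, w, h⟩ := H x (s * y - q * z) (-r * y + p * z)
      refine ⟨u, v, w, ?_⟩
      rw [← h]
      have ey : y = p * (s * y - q * z) + q * (-r * y + p * z) := by linear_combination (-y) * hu
      have ez : z = r * (s * y - q * z) + s * (-r * y + p * z) := by linear_combination (-z) * hu
      generalize s * y - q * z = Y at *
      generalize -r * y + p * z = Z at *
      subst ey ez hf' he' hb' hc' hd'
      ring
    clear hf' he' hb' hc' hd' hg' hdet hm hG hu x y z
    obtain ⟨h, hh⟩ := exists_shift_s17 a f' ha
    obtain ⟨f2, hf2⟩ : ∃ t, t = f' + a * h := ⟨_, rfl⟩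
    obtain ⟨b2, hb2⟩ : ∃ t, t = b' + 2 * f' * h + a * h ^ 2 := ⟨_, rfl⟩
    obtain ⟨d2, hd2⟩ : ∃ t, t = d' + e' * h := ⟨_, rfl⟩
    have hmin : a * b' - f' ^ 2 = a * b2 - f2 ^ 2 := by subst hf2 hb2; ring
    rw [hmin] at hg h3
    rw [← hf2] at hh
    have hdet2 : a * b2 * c' + 2 * d2 * e' * f2 - a * d2 ^ 2 - b2 * e' ^ 2 - c' * f2 ^ 2 = 1 := by
      rw [← hdet']; subst hf2 hb2 hd2; ring
    suffices H : ∀ x y z : ℤ, ∃ u v w : ℤ, a * x ^ 2 + b2 * y ^ 2 + c' * z ^ 2 + 2 * d2 * y * z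
        + 2 * e' * x * z + 2 * f2 * x * y = u ^ 2 + v ^ 2 + w ^ 2 by
      intro x y z
      obtain ⟨u, v, w, h'⟩ := H (x - h * y) y z
      refine ⟨u, v, w, ?_⟩
      rw [← h']; subst hf2 hb2 hd2; ring
    clear hdet' hmin hf2 hb2 hd2
    by_cases hab : a ≤ b2
    · have h4 : 3 * a ^ 2 ≤ 4 * (a * b2 - f2 ^ 2) := by nlinarith
      have ha1 : a = 1 := by
        by_contra hne
        have ha2 : 2 ≤ a := by omega
        generalize a * b2 - f2 ^ 2 = g at *
        have : 9 * a ^ 4 ≤ 16 * g ^ 2 := by nlinarith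
        have : 27 * a ^ 4 ≤ 64 * a := by nlinarith
        have : a ^ 4 ≥ 8 * a := by nlinarith [sq_nonneg a, mul_pos ha ha]
        nlinarith
      subst ha1
      intro x y z
      obtain ⟨u, v, w, h⟩ := tern_one b2 c' d2 e' f2 (by linarith) (by linarith) x y z
      exact ⟨u, v, w, by linarith⟩
    · push Not at hab
      have hb2pos : 0 < b2 := by
        by_contra hcon
        push Not at hcon
        nlinarith [sq_nonneg f2, mul_nonneg ha.le (neg_nonneg.mpr hcon)]
      intro x y z
      obtain ⟨u, v, w, h⟩ := ih b2 a c' e' d2 f2 hb2pos (by push_cast at hk; omega)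
        (by linarith) (by linarith) y x z
      exact ⟨u, v, w, by linarith⟩

lemma three_sq_of (n d A B : ℤ) (hd : 0 < d) (hB : 0 < d * n - 1)
    (h : B ^ 2 + d = (d * n - 1) * A) : ∃ u v w : ℤ, n = u ^ 2 + v ^ 2 + w ^ 2 := by
  have hA : 0 < A := by
    by_contra hcon
    push Not at hcon
    nlinarith [sq_nonneg B, mul_nonneg hB.le (neg_nonneg.mpr hcon)]
  obtain ⟨u, v, w, h⟩ := tern A.toNat A (d * n - 1) n 0 1 B hA (by omega) (by linarith)
    (by linear_combination (-n) * h) 0 0 1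
  exact ⟨u, v, w, by linarith⟩

open scoped NumberTheorySymbols in
lemma sq_of_jac (p d : ℕ) (hp : p.Prime) (h : J(-(d : ℤ) | p) = 1) :
    ∃ B : ℤ, (p : ℤ) ∣ B ^ 2 + d := by
  have : Fact p.Prime := ⟨hp⟩
  obtain ⟨r, hr⟩ := ZMod.isSquare_of_jacobiSym_eq_one h
  refine ⟨(r.val : ℤ), ?_⟩
  rw [← ZMod.intCast_zmod_eq_zero_iff_dvd]
  push_cast
  rw [ZMod.natCast_zmod_val]
  push_cast at hr
  linear_combination -hr

open scoped NumberTheorySymbols in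
lemma jac_a (p d n : ℕ) (hp : p % 4 = 1) (hd : d % 4 = 1) (h : p + 1 = d * n) :
    J(-(d : ℤ) | p) = 1 := by
  have hpo : Odd p := Nat.odd_iff.2 (by omega)
  have hdo : Odd d := Nat.odd_iff.2 (by omega)
  rw [jacobiSym.neg _ hpo, ZMod.χ₄_nat_one_mod_four hp, one_mul,
    jacobiSym.quadratic_reciprocity_one_mod_four hd hpo]
  have : ((p : ℤ)) % d = (-1) % d := by
    apply Int.ModEq.eq
    apply Int.ModEq.symm
    rw [Int.modEq_iff_dvd]
    refine ⟨n, ?_⟩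
    have h' : ((p + 1 : ℕ) : ℤ) = ((d * n : ℕ) : ℤ) := by rw [h]
    push_cast at h'
    linarith
  rw [jacobiSym.mod_left' this, jacobiSym.at_neg_one hdo, ZMod.χ₄_nat_one_mod_four hd]

open scoped NumberTheorySymbols in
lemma jac_b (p d n : ℕ) (hp : p % 4 = 1 ∨ (p % 4 = 3 ∧ d % 4 = 3)) (hd : d % 8 = 1 ∨ d % 8 = 3)
    (h : 2 * p + 1 = d * n) :
    J(-(d : ℤ) | p) = 1 := by
  have hpo : Odd p := Nat.odd_iff.2 (by omega)
  have hdo : Odd d := Nat.odd_iff.2 (by omega)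
  have h1 : J(-(d : ℤ) | p) = J(p | d) := by
    rw [jacobiSym.neg _ hpo]
    rcases hp with hp | ⟨hp, hd3⟩
    · rw [ZMod.χ₄_nat_one_mod_four hp, one_mul, jacobiSym.quadratic_reciprocity_one_mod_four' hdo hp]
    · rw [ZMod.χ₄_nat_three_mod_four hp, jacobiSym.quadratic_reciprocity_three_mod_four hd3 hp]
      ring
  have h2 : J(-2 | d) = 1 := by
    rw [jacobiSym.at_neg_two hdo, ZMod.χ₈'_nat_eq_if_mod_eight]
    rcases hd with hd | hd
    · have : d % 2 = 1 := by omega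
      simp [hd, this]
    · have : d % 2 = 1 := by omega
      simp [hd, this]
  have h3 : J(-2 * (p : ℤ) | d) = 1 := by
    have : (-2 * (p : ℤ)) % d = 1 % d := by
      apply Int.ModEq.eq
      rw [Int.modEq_iff_dvd]
      exact ⟨n, by have : ((2 * p + 1 : ℕ) : ℤ) = ((d * n : ℕ) : ℤ) := by rw [h]
                   push_cast at this
                   linarith⟩
    rw [jacobiSym.mod_left' this, jacobiSym.one_left]
  rw [jacobiSym.mul_left, h2, one_mul] at h3
  rw [h1, h3]

lemma dirichlet (n a : ℕ) (hn : 0 < n) (ha : a < 4 * n) (h : IsCoprime (a : ℤ) (4 * n : ℤ)) :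
    ∃ p j : ℕ, p.Prime ∧ p = a + 4 * n * j := by
  obtain ⟨p, hp, hpp, hpm⟩ := Nat.forall_exists_prime_gt_and_modEq (4 * n) (q := 4 * n) (a := a)
    (by omega) (by rw [← Nat.isCoprime_iff_coprime]; exact_mod_cast h)
  refine ⟨p, p / (4 * n), hpp, ?_⟩
  have h1 : p % (4 * n) = a := by
    rw [hpm, Nat.mod_eq_of_lt ha]
  have := Nat.mod_add_div p (4 * n)
  omega

lemma three_sq_nat (n : ℕ) (h : n % 4 = 1 ∨ n % 4 = 2 ∨ n % 8 = 3) :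
    ∃ u v w : ℤ, (n : ℤ) = u ^ 2 + v ^ 2 + w ^ 2 := by
  by_cases h2 : n % 4 = 2
  · have hc : IsCoprime ((n - 1 : ℕ) : ℤ) (4 * n : ℤ) := by
      rw [Nat.cast_sub (by omega)]
      apply IsCoprime.mul_right
      · obtain ⟨k, hk⟩ : ∃ k, n = 4 * k + 2 := ⟨n / 4, by omega⟩
        subst hk
        exact ⟨1, -k, by push_cast; ring⟩
      · exact ⟨-1, 1, by push_cast; ring⟩
    obtain ⟨p, j, hp, hpj⟩ := dirichlet n (n - 1) (by omega) (by omega) hc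
    have hpd : p + 1 = (4 * j + 1) * n := by
      rw [hpj]; have : n - 1 + 1 = n := by omega
      nlinarith
    have hp4 : p % 4 = 1 := by
      rw [hpj, Nat.add_mod, mul_assoc, Nat.mul_mod_right]; omega
    obtain ⟨B, A, hB⟩ := sq_of_jac p (4 * j + 1) hp (jac_a p (4 * j + 1) n hp4 (by omega) hpd)
    have hpz : ((4 * j + 1 : ℕ) : ℤ) * n - 1 = p := by
      have : ((p + 1 : ℕ) : ℤ) = (((4 * j + 1) * n : ℕ) : ℤ) := by rw [hpd]
      push_cast at this ⊢; linarith
    have := hp.pos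
    exact three_sq_of n (4 * j + 1 : ℕ) A B (by positivity) (by rw [hpz]; exact_mod_cast this)
      (by rw [hpz, hB])
  · obtain ⟨c, a, hc, hca⟩ : ∃ c a : ℕ, 2 * a + 1 = c * n ∧ ((c = 3 ∧ (n % 8 = 1 ∨ n % 8 = 5)) ∨ (c = 1 ∧ n % 8 = 3)) := by
      by_cases h3 : n % 8 = 3
      · exact ⟨1, n / 2, by omega, Or.inr ⟨rfl, h3⟩⟩
      · exact ⟨3, 3 * n / 2, by omega, Or.inl ⟨rfl, by omega⟩⟩
    have hn : 0 < n := by omega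
    have ha4 : (a % 4 = 1 ∨ (a % 4 = 3 ∧ c = 3)) ∧ a < 4 * n := by
      rcases hca with ⟨rfl, h'⟩ | ⟨rfl, h'⟩ <;> omega
    have hcop : IsCoprime (a : ℤ) (4 * n : ℤ) := by
      apply IsCoprime.mul_right
      · rcases (by omega : a % 4 = 1 ∨ a % 4 = 3) with h4 | h4
        · obtain ⟨k, hk⟩ : ∃ k, a = 4 * k + 1 := ⟨a / 4, by omega⟩
          subst hk
          exact ⟨1, -k, by push_cast; ring⟩
        · obtain ⟨k, hk⟩ : ∃ k, a = 4 * k + 3 := ⟨a / 4, by omega⟩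
          subst hk
          exact ⟨-1, k + 1, by push_cast; ring⟩
      · refine ⟨-2, c, ?_⟩
        have : ((2 * a + 1 : ℕ) : ℤ) = ((c * n : ℕ) : ℤ) := by rw [hc]
        push_cast at this; linarith
    obtain ⟨p, j, hp, hpj⟩ := dirichlet n a hn ha4.2 hcop
    have hpd : 2 * p + 1 = (8 * j + c) * n := by
      rw [hpj]; nlinarith
    have hp4 : p % 4 = a % 4 := by
      rw [hpj, Nat.add_mod, mul_assoc, Nat.mul_mod_right]; omega
    obtain ⟨B, hB⟩ := sq_of_jac p (8 * j + c) hp (jac_b p (8 * j + c) n (by omega) (by omega) hpd)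
    have hpz : ((8 * j + c : ℕ) : ℤ) * n - 1 = 2 * p := by
      have : ((2 * p + 1 : ℕ) : ℤ) = (((8 * j + c) * n : ℕ) : ℤ) := by rw [hpd]
      push_cast at this ⊢; linarith
    have hpos := hp.pos
    have hodd : ∃ B' : ℤ, (p : ℤ) ∣ B' ^ 2 + (8 * j + c : ℕ) ∧ B' % 2 = 1 := by
      rcases Int.emod_two_eq_zero_or_one B with h0 | h0
      · refine ⟨B + p, ?_, by omega⟩
        have : (B + p) ^ 2 + ((8 * j + c : ℕ) : ℤ) = B ^ 2 + (8 * j + c : ℕ) + p * (2 * B + p) := by ring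
        rw [this]
        exact dvd_add hB (dvd_mul_right _ _)
      · exact ⟨B, hB, h0⟩
    obtain ⟨B', hB', hB2⟩ := hodd
    have h2d : (2 : ℤ) ∣ B' ^ 2 + (8 * j + c : ℕ) := by
      have : B' ^ 2 % 2 = 1 := by
        rw [pow_two, Int.mul_emod, hB2]; rfl
      omega
    have hcp : IsCoprime (2 : ℤ) p := by
      exact_mod_cast Nat.isCoprime_iff_coprime.2 (by
        rw [Nat.coprime_two_left, Nat.odd_iff]; omega)
    obtain ⟨A, hA⟩ := hcp.mul_dvd h2d hB'
    refine three_sq_of n (8 * j + c : ℕ) A B' ?_ (by rw [hpz]; positivity) (by rw [hpz, hA])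
    have : 0 < 8 * j + c := by omega
    exact_mod_cast this

lemma three_sq (n : ℤ) (h0 : 0 ≤ n) (h : n % 4 = 1 ∨ n % 4 = 2 ∨ n % 8 = 3) :
    ∃ u v w : ℤ, n = u ^ 2 + v ^ 2 + w ^ 2 := by
  lift n to ℕ using h0
  exact three_sq_nat n (by omega)

def PRep (a b : ℤ) : Prop := ∃ x1 x2 x3 x4 x5 : ℤ,
  x1 + x2 + 2 * x3 + 3 * x4 + 5 * x5 = b ∧
  x1 ^ 2 + x2 ^ 2 + 2 * x3 ^ 2 + 3 * x4 ^ 2 + 5 * x5 ^ 2 = a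

def chk (a b : ℤ) (w : ℤ × ℤ × ℤ × ℤ) : Bool :=
  let x2 := b - w.1 - 2 * w.2.1 - 3 * w.2.2.1 - 5 * w.2.2.2
  decide (w.1 * w.1 + x2 * x2 + 2 * (w.2.1 * w.2.1) + 3 * (w.2.2.1 * w.2.2.1)
    + 5 * (w.2.2.2 * w.2.2.2) = a)

lemma rep_of_chk (a b : ℤ) (w : ℤ × ℤ × ℤ × ℤ) (h : chk a b w = true) : PRep a b := by
  simp only [chk, decide_eq_true_eq] at h
  exact ⟨w.1, b - w.1 - 2 * w.2.1 - 3 * w.2.2.1 - 5 * w.2.2.2, w.2.1, w.2.2.1, w.2.2.2,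
    by ring, by linear_combination h⟩

def wit_small : List (ℤ × ℤ × ℤ × ℤ) :=
  [(-1, 0, 0, 0), (-1, 0, 0, 0), (-1, 1, 0, 0), (0, 0, 0, 0), (1, 0, 0, 0), (0, 1, 0, 0),
   (1, 1, 0, 0), (1, 0, 1, 0), (0, -1, 0, 0), (-1, 1, 0, 0), (-1, 0, 0, 0), (0, -1, 1, 0),
   (-1, 1, 0, 0), (2, 0, 0, 0), (0, 2, 0, 0), (2, 1, 0, 0), (-2, 0, 0, 0), (-2, 1, 0, 0),
   (-2, 1, 0, 0), (-2, 0, 1, 0), (0, 0, 0, 0), (1, 0, 0, 0), (0, 1, 0, 0), (1, 1, 0, 0),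
   (-2, 1, 0, 0), (-2, 0, 0, 0), (0, 1, -1, 0), (-1, 0, 0, 0), (-2, 0, 1, 0), (-1, 1, 0, 0),
   (2, 0, 0, 0), (-1, 0, 2, 0), (-2, -1, 1, 0), (-2, -1, 1, 0), (0, -1, 0, 0), (1, -1, 0, 0),
   (-2, 2, 0, 0), (0, -1, 1, 0), (1, -1, 1, 0), (-2, 2, 1, 0), (-3, 1, 0, 0), (-3, 1, 0, 0),
   (-2, 0, 0, 0), (-3, 1, 1, 0), (-2, 1, 0, 0), (0, 0, 0, 0), (1, 0, 0, 0), (3, 0, 0, 0),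
   (-3, 0, 0, 0), (-1, -2, 0, 1), (-3, 1, 0, 0), (-3, 0, 1, 0), (-1, 0, 0, 0), (-3, 1, 1, 0),
   (-1, 1, 0, 0), (2, 0, 0, 0), (-2, -1, 0, 0), (-2, 2, 0, 0), (-3, 2, 0, 0), (0, -1, 0, 0),
   (1, -1, 0, 0), (3, -1, 0, 0), (-2, 2, 0, 0), (1, -1, 1, 0), (0, -2, 0, 0), (-3, 0, 0, 0),
   (-1, -1, 0, 0), (-2, 0, 0, 0), (-3, 2, 0, 0), (-2, 1, 0, 0), (-2, 3, 0, 0), (-3, 2, 1, 0),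
   (1, 1, 0, 0), (1, 0, 1, 0), (2, -2, 0, 0), (1, 1, 1, 0), (-2, 3, 0, 0), (2, -2, 1, 0),
   (0, 0, 0, 0), (1, 0, 0, 0), (-3, 2, 0, 0), (2, 1, 0, 0), (2, 0, 1, 0), (-3, 2, 1, 0),
   (2, 1, 1, 0), (-1, 0, 0, 0), (3, -1, 0, 0), (-1, 1, 0, 0), (-3, 1, 1, 0), (0, 2, 0, 0),
   (-3, 0, 0, 0), (3, -2, 0, 0), (-3, 1, 0, 0), (1, -1, 0, 0), (3, -2, 1, 0), (-3, 1, 1, 0),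
   (3, 0, 0, 0), (1, -3, 1, 0), (3, 1, 0, 0), (-1, -1, 0, 0), (-2, 0, 0, 0), (3, 1, 1, 0),
   (-2, 1, 0, 0), (-2, 0, 1, 0), (-3, -1, 0, 0), (-1, -3, 0, 1), (-3, 2, 1, 0), (-3, -1, 1, 0),
   (-1, 1, -1, 0), (2, 0, -1, 0), (-3, 2, 0, 0), (4, -1, 0, 0), (1, 0, 1, 0), (0, 1, 1, 0),
   (-2, -1, 0, 0), (-3, 1, 2, 0), (3, 2, 0, 0), (-2, -1, 1, 0), (4, 0, -1, 0), (0, 0, 0, 0),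
   (2, 1, 0, 0), (4, 0, 0, 0), (0, -2, 0, 0), (-3, 0, 0, 0), (1, 3, 0, 0), (-3, 1, 0, 0),
   (-1, 0, 0, 0), (1, 3, 1, 0), (0, 2, 0, 0), (1, 2, 0, 0), (-1, 3, 0, 0), (0, 2, 1, 0),
   (2, -2, 0, 0), (0, -1, 0, 0), (1, -1, 0, 0), (2, -2, 1, 0), (1, -3, 0, 0), (3, 1, 0, 0),
   (2, 2, 0, 0), (1, -3, 1, 0), (-1, -1, 0, 0), (-2, 0, 0, 0), (0, 1, -1, 0), (-2, 1, 0, 0),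
   (-2, -2, 0, 0), (-2, 3, 0, 0), (-3, 1, -1, 0), (-2, -2, 1, 0), (-2, 3, 1, 0), (3, -2, 0, 0),
   (3, 3, 0, 0), (4, 0, -1, 0), (3, -1, 1, 0), (-2, 2, 1, 0), (5, 0, 0, 0), (-2, -1, 0, 0),
   (5, 1, 0, 0), (5, 0, 1, 0), (-2, -1, 1, 0), (5, 1, 1, 0)]

lemma chk_small : ∀ k ∈ List.range 160,
    chk (2 * (((k / 8 : ℕ) : ℤ) + 1) + (((k % 8 : ℕ) : ℤ) - 1)) (((k % 8 : ℕ) : ℤ) - 1) (wit_small.getD k (0, 0, 0, 0)) = true := by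
  decide +kernel

lemma rep_small (k : ℕ) (hk : k < 160) : PRep (2 * (((k / 8 : ℕ) : ℤ) + 1) + (((k % 8 : ℕ) : ℤ) - 1)) (((k % 8 : ℕ) : ℤ) - 1) :=
  rep_of_chk _ _ _ (chk_small k (List.mem_range.2 hk))

def wit_six7 : List (ℤ × ℤ × ℤ × ℤ) :=
  [(-1, 0, 2, 0), (-3, 1, 1, 0), (5, 1, 1, 0), (4, -3, 1, 0), (-3, -1, 1, 0), (2, -3, -1, 1),
   (5, 3, 1, 0), (0, -1, -1, 0), (11, 1, -1, 0), (4, -3, -1, 0), (-3, -3, 1, 0), (7, 2, 2, 0),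
   (8, 3, 1, 0), (7, 1, 3, 0), (13, -1, 1, 0), (11, 0, 2, 0), (12, 1, 1, 0), (16, -1, -1, 0),
   (15, 2, 0, -1), (13, 1, 1, 0), (17, 1, -3, 0), (13, 0, 2, 0), (11, 2, 2, 0), (16, -1, 1, 0),
   (19, -3, -1, 0)]

lemma chk_six7 : ∀ k ∈ List.range 25,
    chk (2 * (8 * (k : ℤ) + 7)) 6 (wit_six7.getD k (0, 0, 0, 0)) = true := by
  decide +kernel

lemma rep_six7 (k : ℕ) (hk : k < 25) : PRep (2 * (8 * (k : ℤ) + 7)) 6 :=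
  rep_of_chk _ _ _ (chk_six7 k (List.mem_range.2 hk))

def wit_six8 : List (ℤ × ℤ × ℤ × ℤ) :=
  [(-2, 2, 1, 0), (1, 3, 2, 0), (7, 1, 2, 0), (-1, -2, -1, 0), (13, 0, 1, 0), (15, 2, -1, 0),
   (17, -2, 1, 0), (19, 0, -1, 0), (15, 1, 2, 0), (20, -3, 0, 1), (22, 0, -1, 0), (22, -2, 1, 0),
   (22, 2, -1, 0), (22, 0, 1, 0), (27, -1, -2, 0), (29, -2, -3, 0), (30, -1, -2, -1),
   (29, -1, 0, -1)]

lemma chk_six8 : ∀ k ∈ List.range 18,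
    chk (2 * (32 * (k : ℤ) + 8)) 6 (wit_six8.getD k (0, 0, 0, 0)) = true := by
  decide +kernel

lemma rep_six8 (k : ℕ) (hk : k < 18) : PRep (2 * (32 * (k : ℤ) + 8)) 6 :=
  rep_of_chk _ _ _ (chk_six8 k (List.mem_range.2 hk))

def wit_six4 : List (ℤ × ℤ × ℤ × ℤ) :=
  [(1, 0, 1, 0), (-2, 2, 1, 0), (-3, 2, 1, 0), (-2, 0, 1, 0), (2, -2, 1, 0), (-3, 0, 1, 0),
   (2, 0, -1, 0), (-2, 2, -1, 0), (5, 2, 1, 0), (1, 3, 2, 0), (5, 1, 2, 0), (6, 2, 1, 0),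
   (-1, 0, -1, 0), (7, -1, -2, 0), (9, 0, 1, 0), (-2, 0, -1, 0), (10, 2, -1, 0), (7, 1, 2, 0),
   (10, 0, 1, 0), (11, -3, 0, 1), (11, 2, -1, 0), (5, 3, 2, 0), (1, -1, -2, 0), (9, 2, 1, 0),
   (7, -3, -2, 0), (-1, -2, -1, 0), (13, -2, 1, 0), (14, 0, -1, 0), (10, 2, 1, 0),
   (-2, -2, -1, 0), (7, 3, 2, 0), (14, -2, 1, 0), (15, 0, -1, 0), (13, 0, 1, 0), (7, 2, 3, 0),
   (14, 2, -1, 0), (10, 0, 3, 0), (11, 1, 2, 0), (-3, -1, -2, 0), (14, 0, 1, 0), (2, -2, -3, 0),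
   (15, 2, -1, 0), (11, 0, 3, 0), (17, 1, -2, 0), (18, -2, -1, 0), (-2, 2, -3, -1), (13, 2, 1, 0),
   (18, -3, -2, 1), (-1, -3, -2, 0), (17, -2, 1, 0)]

lemma chk_six4 : ∀ k ∈ List.range 50,
    chk (2 * (4 * ((k : ℤ) + 1))) 6 (wit_six4.getD k (0, 0, 0, 0)) = true := by
  decide +kernel

lemma rep_six4 (k : ℕ) (hk : k < 50) : PRep (2 * (4 * ((k : ℤ) + 1))) 6 :=
  rep_of_chk _ _ _ (chk_six4 k (List.mem_range.2 hk))

def wit_zero7 : List (ℤ × ℤ × ℤ × ℤ) :=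
  [(-1, -2, 0, 1), (0, 1, 1, 0), (4, -1, 1, 0), (4, -3, -1, 0), (3, 1, 1, 0), (4, -1, 2, 0),
   (8, -3, 1, 0), (7, -2, 0, 1), (1, 2, 2, 0), (5, 0, 2, 0), (3, 3, 1, 0)]

lemma chk_zero7 : ∀ k ∈ List.range 11,
    chk (2 * (8 * (k : ℤ) + 7)) 0 (wit_zero7.getD k (0, 0, 0, 0)) = true := by
  decide +kernel

lemma rep_zero7 (k : ℕ) (hk : k < 11) : PRep (2 * (8 * (k : ℤ) + 7)) 0 :=
  rep_of_chk _ _ _ (chk_zero7 k (List.mem_range.2 hk))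

def wit_zero4 : List (ℤ × ℤ × ℤ × ℤ) :=
  [(0, 0, 0, 0), (-2, 0, 0, 0), (-2, 2, 0, 0), (0, 2, 0, 0), (4, 0, 0, 0), (-2, 2, 1, 0),
   (2, 2, 0, 0), (0, 1, 0, 1), (-1, 1, 2, 0), (6, 0, 0, 0), (2, 0, 2, 0), (4, 2, 0, 0),
   (2, 2, 1, 0), (5, -3, -2, 0), (2, 0, 1, 1), (6, 0, 1, 0), (8, 0, 0, 0), (8, -3, 0, 1),
   (6, 2, 0, 0), (7, 0, 1, 0), (-2, 2, 3, 0), (2, 2, 2, 0), (5, 1, 0, 1)]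

lemma chk_zero4 : ∀ k ∈ List.range 23,
    chk (2 * (4 * (k : ℤ))) 0 (wit_zero4.getD k (0, 0, 0, 0)) = true := by
  decide +kernel

lemma rep_zero4 (k : ℕ) (hk : k < 23) : PRep (2 * (4 * (k : ℤ))) 0 :=
  rep_of_chk _ _ _ (chk_zero4 k (List.mem_range.2 hk))

def Sq3 (k : ℤ) : Prop := ∃ u v w : ℤ, k = u ^ 2 + v ^ 2 + w ^ 2

lemma Sq3.four {k : ℤ} (h : Sq3 k) : Sq3 (4 * k) := by
  obtain ⟨u, v, w, h⟩ := h
  exact ⟨2 * u, 2 * v, 2 * w, by rw [h]; ring⟩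

lemma sq_mod3 (x : ℤ) : (x % 3 = 0 ∧ x ^ 2 % 3 = 0) ∨ (x % 3 ≠ 0 ∧ x ^ 2 % 3 = 1) := by
  have : x % 3 = 0 ∨ x % 3 = 1 ∨ x % 3 = 2 := by omega
  rcases this with h | h | h <;> simp [pow_two, Int.mul_emod, h]

lemma sq_mod4 (x : ℤ) : (x % 2 = 0 ∧ x ^ 2 % 4 = 0) ∨ (x % 2 = 1 ∧ x ^ 2 % 4 = 1) := by
  have : x % 4 = 0 ∨ x % 4 = 1 ∨ x % 4 = 2 ∨ x % 4 = 3 := by omega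
  rcases this with h | h | h | h
  · exact Or.inl ⟨by omega, by simp [pow_two, Int.mul_emod, h]⟩
  · exact Or.inr ⟨by omega, by simp [pow_two, Int.mul_emod, h]⟩
  · exact Or.inl ⟨by omega, by simp [pow_two, Int.mul_emod, h]⟩
  · exact Or.inr ⟨by omega, by simp [pow_two, Int.mul_emod, h]⟩

lemma sign4 (x c : ℤ) (hx : x % 2 = 1) (hc : c % 2 = 1) :
    ∃ y : ℤ, y ^ 2 = x ^ 2 ∧ (y = x ∨ y = -x) ∧ (y - c) % 4 = 0 := by
  by_cases h : (x - c) % 4 = 0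
  · exact ⟨x, rfl, Or.inl rfl, h⟩
  · exact ⟨-x, by ring, Or.inr rfl, by omega⟩

lemma sign3 (x c : ℤ) (hx : x % 3 ≠ 0) (hc : c % 3 ≠ 0) :
    ∃ y : ℤ, y ^ 2 = x ^ 2 ∧ (y = x ∨ y = -x) ∧ (y - c) % 3 = 0 := by
  have h1 : x % 3 = 1 ∨ x % 3 = 2 := by omega
  have h2 : c % 3 = 1 ∨ c % 3 = 2 := by omega
  by_cases h : (x - c) % 3 = 0
  · exact ⟨x, rfl, Or.inl rfl, h⟩
  · exact ⟨-x, by ring, Or.inr rfl, by omega⟩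

lemma odd_rec (a b t R v w : ℤ) (h : 12 * a - b ^ 2 - 10 * t ^ 2 = R ^ 2 + v ^ 2 + w ^ 2)
    (hb : b % 2 = 1) (ht : t % 2 = 0) (hR4 : (R - b) % 4 = 0) (hR3 : (R - (b + t)) % 3 = 0)
    (hv : v % 3 = 0) (hw : (w - (t - b)) % 3 = 0) (hvw : (v - w) % 4 = 0) (hv2 : v % 2 = 1) :
    PRep a b := by
  obtain ⟨x5, h5⟩ : ∃ x5, R = b - 2 * t - 12 * x5 := ⟨(b - 2 * t - R) / 12, by omega⟩
  obtain ⟨x4, h4⟩ : ∃ x4, v = b + R - w - 12 * x4 := ⟨(b + R - w - v) / 12, by omega⟩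
  obtain ⟨x3, h3⟩ : ∃ x3, b + R + 2 * w = 12 * x3 := ⟨(b + R + 2 * w) / 12, by omega⟩
  have hw' : w = 6 * x3 - b + t + 6 * x5 := by omega
  have hv' : v = 3 * b - 6 * x3 - 3 * t - 18 * x5 - 12 * x4 := by omega
  refine ⟨b - t - 6 * x5 - 3 * x4 - 2 * x3, x5 + t, x3, x4, x5, by ring, ?_⟩
  have : (12 : ℤ) * ((b - t - 6 * x5 - 3 * x4 - 2 * x3) ^ 2 + (x5 + t) ^ 2 + 2 * x3 ^ 2
      + 3 * x4 ^ 2 + 5 * x5 ^ 2) = 12 * a := by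
    rw [hw', hv', h5] at h
    linear_combination -h
  linarith

lemma odd_case1 (a b : ℤ) (hb : b % 2 = 1) (hb3 : b % 3 ≠ 0) (ha : a % 2 = 1)
    (h0 : 0 ≤ 12 * a - b ^ 2 - 40) : PRep a b := by
  have hb8 : b ^ 2 % 8 = 1 := by
    obtain ⟨k, hk⟩ : ∃ k, b = 2 * k + 1 := ⟨b / 2, by omega⟩
    obtain ⟨l, hl⟩ := Int.even_mul_succ_self k
    have : b ^ 2 = 4 * (k * (k + 1)) + 1 := by rw [hk]; ring
    omega
  obtain ⟨u, v, w, h⟩ := three_sq _ h0 (by omega)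
  have hb3' := sq_mod3 b
  have hu := sq_mod3 u
  have hv := sq_mod3 v
  have hw := sq_mod3 w
  have hu4 := sq_mod4 u
  have hv4 := sq_mod4 v
  have hw4 := sq_mod4 w
  obtain ⟨R, v, w, h, hR, hv, hw, hR2, hv2, hw2⟩ : ∃ R v w : ℤ,
      12 * a - b ^ 2 - 40 = R ^ 2 + v ^ 2 + w ^ 2 ∧ R % 3 = 0 ∧ v % 3 = 0 ∧ w % 3 ≠ 0 ∧
      R % 2 = 1 ∧ v % 2 = 1 ∧ w % 2 = 1 := by
    by_cases h1 : w % 3 = 0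
    · by_cases h2 : v % 3 = 0
      · exact ⟨w, v, u, by linarith, by omega, by omega, by omega, by omega, by omega, by omega⟩
      · exact ⟨w, u, v, by linarith, by omega, by omega, by omega, by omega, by omega, by omega⟩
    · exact ⟨u, v, w, by linarith, by omega, by omega, by omega, by omega, by omega, by omega⟩
  obtain ⟨w', hw1, hw', hwb⟩ := sign3 w b hw hb3
  obtain ⟨v', hv1, hv', hvb⟩ := sign4 v w' hv2 (by omega)
  obtain ⟨R', hR1, hR', hRb⟩ := sign4 R b hR2 (by omega)
  obtain ⟨t, ht, htb⟩ : ∃ t : ℤ, (t = 2 ∨ t = -2) ∧ (t + b) % 3 = 0 := by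
    by_cases h1 : b % 3 = 1
    · exact ⟨2, by simp, by omega⟩
    · exact ⟨-2, by simp, by omega⟩
  have ht2 : t ^ 2 = 4 := by rcases ht with rfl | rfl <;> norm_num
  exact odd_rec a b t R' v' w' (by rw [ht2, hR1, hv1, hw1]; linarith) hb (by omega) hRb
    (by omega) (by omega) (by omega) hvb (by omega)

lemma odd_case3 (a : ℤ) (ha : a % 2 = 1)
    (h0 : 0 ≤ 12 * a - 49) : PRep a 3 := by
  obtain ⟨u, v, w, h⟩ := three_sq _ h0 (by omega)
  have hu := sq_mod3 u
  have hv := sq_mod3 v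
  have hw := sq_mod3 w
  have hu4 := sq_mod4 u
  have hv4 := sq_mod4 v
  have hw4 := sq_mod4 w
  obtain ⟨R, v, w, h, hR, hv, hw, hR2, hv2, hw2⟩ : ∃ R v w : ℤ,
      12 * a - 49 = R ^ 2 + v ^ 2 + w ^ 2 ∧ R % 3 ≠ 0 ∧ v % 3 = 0 ∧ w % 3 ≠ 0 ∧
      R % 2 = 1 ∧ v % 2 = 1 ∧ w % 2 = 1 := by
    by_cases h1 : w % 3 = 0
    · exact ⟨u, w, v, by linarith, by omega, by omega, by omega, by omega, by omega, by omega⟩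
    · by_cases h2 : v % 3 = 0
      · exact ⟨u, v, w, by linarith, by omega, by omega, by omega, by omega, by omega, by omega⟩
      · exact ⟨v, u, w, by linarith, by omega, by omega, by omega, by omega, by omega, by omega⟩
  obtain ⟨R', hR1, hR', hRb⟩ := sign4 R 3 hR2 (by omega)
  obtain ⟨t, ht, htb⟩ : ∃ t : ℤ, (t = 2 ∨ t = -2) ∧ (R' - t) % 3 = 0 := by
    have h0 : R' % 3 ≠ 0 := by rcases hR' with rfl | rfl <;> omega
    by_cases h1 : R' % 3 = 2
    · exact ⟨2, by simp, by omega⟩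
    · exact ⟨-2, by simp, by omega⟩
  obtain ⟨w', hw1, hw', hwb⟩ := sign3 w t hw (by omega)
  obtain ⟨v', hv1, hv', hvb⟩ := sign4 v w' hv2 (by omega)
  have ht2 : t ^ 2 = 4 := by rcases ht with rfl | rfl <;> norm_num
  exact odd_rec a 3 t R' v' w' (by rw [ht2, hR1, hv1, hw1]; linarith) (by norm_num) (by omega) hRb
    (by omega) (by omega) (by omega) hvb (by omega)

lemma even_rec (α β τ u v w : ℤ)
    (h : 9 * α - 4 * β ^ 2 + 30 * β * τ - 90 * τ ^ 2 = u ^ 2 + v ^ 2 + w ^ 2)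
    (hw : w % 3 = 0) (huv : (u - v) % 3 = 0) (hH : (u + v - (β - 15 * τ)) % 9 = 0) :
    PRep (2 * α) (2 * β) := by
  obtain ⟨p, hp⟩ : ∃ p, w = 3 * p := ⟨w / 3, by omega⟩
  obtain ⟨s, hs⟩ : ∃ s, u + v = 9 * s + (β - 15 * τ) := ⟨(u + v - (β - 15 * τ)) / 9, by omega⟩
  obtain ⟨G, hG⟩ : ∃ G, u - v = 3 * G := ⟨(u - v) / 3, by omega⟩
  obtain ⟨k, hk⟩ : ∃ k, G - β + 5 * τ + s = 2 * k := ⟨(G - β + 5 * τ + s) / 2, by omega⟩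
  refine ⟨β - 5 * τ + k + p, β - 5 * τ + k - p, s - k, s, 2 * τ - s, by ring, ?_⟩
  have h2 : 2 * (9 * α - 4 * β ^ 2 + 30 * β * τ - 90 * τ ^ 2)
      = (u + v) ^ 2 + (u - v) ^ 2 + 2 * w ^ 2 := by rw [h]; ring
  have hG' : G = 2 * k + β - 5 * τ - s := by linarith
  rw [hG, hs, hp, hG'] at h2
  have : (9 : ℤ) * ((β - 5 * τ + k + p) ^ 2 + (β - 5 * τ + k - p) ^ 2 + 2 * (s - k) ^ 2
      + 3 * s ^ 2 + 5 * (2 * τ - s) ^ 2) = 9 * (2 * α) := by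
    linear_combination -h2
  linarith

lemma even0 (α β τ k : ℤ) (hk : Sq3 k)
    (h : 9 * k = 9 * α - 4 * β ^ 2 + 30 * β * τ - 90 * τ ^ 2) (h9 : (β - 15 * τ) % 9 = 0) :
    PRep (2 * α) (2 * β) := by
  obtain ⟨u, v, w, rfl⟩ := hk
  obtain ⟨u', v', w', h', huv⟩ : ∃ u' v' w' : ℤ,
      u ^ 2 + v ^ 2 + w ^ 2 = u' ^ 2 + v' ^ 2 + w' ^ 2 ∧ (u' + v') % 3 = 0 := by
    by_cases h1 : (u + v) % 3 = 0
    · exact ⟨u, v, w, rfl, h1⟩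
    by_cases h2 : (u - v) % 3 = 0
    · exact ⟨u, -v, w, by ring, by omega⟩
    by_cases h3 : (u + w) % 3 = 0
    · exact ⟨u, w, v, by ring, by omega⟩
    by_cases h4 : (u - w) % 3 = 0
    · exact ⟨u, -w, v, by ring, by omega⟩
    by_cases h5 : (v + w) % 3 = 0
    · exact ⟨v, w, u, by ring, by omega⟩
    · have hu : u % 3 = 0 ∨ u % 3 = 1 ∨ u % 3 = 2 := by omega
      have hv : v % 3 = 0 ∨ v % 3 = 1 ∨ v % 3 = 2 := by omega
      have hw : w % 3 = 0 ∨ w % 3 = 1 ∨ w % 3 = 2 := by omega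
      exact ⟨v, -w, u, by ring, by omega⟩
  exact even_rec α β τ (3 * u') (3 * v') (3 * w') (by rw [← h, h']; ring) (by omega) (by omega)
    (by omega)

lemma sq_mod9 (X Y : ℤ) (h : (9 : ℤ) ∣ X ^ 2 - Y ^ 2) (hX : X % 3 ≠ 0) :
    (X - Y) % 9 = 0 ∨ (X + Y) % 9 = 0 := by
  have h' : (9 : ℤ) ∣ (X - Y) * (X + Y) := by
    have : (X - Y) * (X + Y) = X ^ 2 - Y ^ 2 := by ring
    rwa [this]
  have hcop : ∀ z : ℤ, z % 3 ≠ 0 → IsCoprime (9 : ℤ) z := by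
    intro z hz
    have h3 : IsCoprime (3 : ℤ) z := by
      rcases (by omega : z % 3 = 1 ∨ z % 3 = 2) with h | h
      · exact ⟨-(z / 3), 1, by omega⟩
      · exact ⟨z / 3 + 1, -1, by omega⟩
    have := IsCoprime.pow_left (m := 2) h3
    norm_num at this
    exact this
  by_cases h1 : (X - Y) % 3 = 0
  · left
    exact Int.emod_eq_zero_of_dvd ((hcop (X + Y) (by omega)).dvd_of_dvd_mul_right h')
  · right
    exact Int.emod_eq_zero_of_dvd ((hcop (X - Y) h1).dvd_of_dvd_mul_left h')

lemma even1 (α β τ k : ℤ) (hk : Sq3 k)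
    (h : k = 9 * α - 4 * β ^ 2 + 30 * β * τ - 90 * τ ^ 2) (hβ : β % 3 ≠ 0) :
    PRep (2 * α) (2 * β) := by
  obtain ⟨u, v, w, hk⟩ := hk
  have hu := sq_mod3 u
  have hv := sq_mod3 v
  have hw := sq_mod3 w
  have hb := sq_mod3 β
  have hk3 : k % 3 = 2 := by
    have : k = 3 * (3 * α - β ^ 2 + 10 * β * τ - 30 * τ ^ 2) - β ^ 2 := by rw [h]; ring
    omega
  obtain ⟨u, v, w, h', hu, hv, hw⟩ : ∃ u' v' w' : ℤ,
      k = u' ^ 2 + v' ^ 2 + w' ^ 2 ∧ u' % 3 ≠ 0 ∧ v' % 3 ≠ 0 ∧ w' % 3 = 0 := by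
    by_cases h1 : w % 3 = 0
    · exact ⟨u, v, w, hk, by omega, by omega, h1⟩
    by_cases h2 : v % 3 = 0
    · exact ⟨u, w, v, by linarith, by omega, by omega, h2⟩
    · exact ⟨v, w, u, by linarith, by omega, by omega, by omega⟩
  obtain ⟨v', hv1, hv', hvu⟩ := sign3 v u hv hu
  obtain ⟨G, hG⟩ : ∃ G, u - v' = 3 * G := ⟨(u - v') / 3, by omega⟩
  obtain ⟨p, hp⟩ : ∃ p, w = 3 * p := ⟨w / 3, by omega⟩
  have h2 : 2 * (9 * α - 4 * β ^ 2 + 30 * β * τ - 90 * τ ^ 2)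
      = (u + v') ^ 2 + (u - v') ^ 2 + 2 * w ^ 2 := by rw [← h, h', ← hv1]; ring
  have h9 : (9 : ℤ) ∣ (u + v') ^ 2 - (β - 15 * τ) ^ 2 := by
    rw [hG, hp] at h2
    refine ⟨2 * α - β ^ 2 + 10 * β * τ - 45 * τ ^ 2 - G ^ 2 - 2 * p ^ 2, ?_⟩
    linear_combination -h2
  rcases sq_mod9 _ _ h9 (by omega) with h3 | h3
  · exact even_rec α β τ u v' w (by rw [← h, h', hv1]) hw (by omega) h3
  · exact even_rec α β τ (-u) (-v') (-w) (by rw [← h, h', ← hv1]; ring) (by omega) (by omega)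
      (by omega)

lemma rep_b0 (α : ℤ) (h0 : 0 ≤ α) : PRep (2 * α) (2 * 0) := by
  by_cases h7 : α % 8 = 7
  · by_cases hs : α < 90
    · obtain ⟨k, hk⟩ : ∃ k : ℕ, α = 8 * (k : ℤ) + 7 := ⟨(α / 8).toNat, by omega⟩
      rw [hk]; exact rep_zero7 k (by omega)
    · exact even0 α 0 3 (α - 90) (three_sq _ (by omega) (by omega)) (by ring) (by norm_num)
  by_cases h4 : α % 4 = 0
  · by_cases hs : α < 90
    · obtain ⟨k, hk⟩ : ∃ k : ℕ, α = 4 * (k : ℤ) := ⟨(α / 4).toNat, by omega⟩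
      rw [hk]; exact rep_zero4 k (by omega)
    · exact even0 α 0 3 (α - 90) (three_sq _ (by omega) (by omega)) (by ring) (by norm_num)
  exact even0 α 0 0 α (three_sq _ (by omega) (by omega)) (by ring) (by norm_num)

lemma rep_b2 (α : ℤ) (h0 : 20 ≤ α) : PRep (2 * α) (2 * 1) := by
  by_cases h4 : α % 4 = 0
  · obtain ⟨γ, hγ⟩ : ∃ γ, α = 4 * γ := ⟨α / 4, by omega⟩
    by_cases h7 : γ % 8 = 7
    · exact even1 α 1 0 (4 * (9 * γ - 1)) (Sq3.four (three_sq _ (by omega) (by omega)))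
        (by rw [hγ]; ring) (by norm_num)
    by_cases h8 : γ % 8 = 0
    · exact even1 α 1 (-1) (4 * (9 * γ - 31)) (Sq3.four (three_sq _ (by omega) (by omega)))
        (by rw [hγ]; ring) (by norm_num)
    by_cases h1 : γ % 2 = 0
    · exact even1 α 1 0 (4 * (9 * γ - 1)) (Sq3.four (three_sq _ (by omega) (by omega)))
        (by rw [hγ]; ring) (by norm_num)
    · exact even1 α 1 1 (4 * (9 * γ - 16)) (Sq3.four (three_sq _ (by omega) (by omega)))
        (by rw [hγ]; ring) (by norm_num)
  by_cases h3 : α % 8 = 3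
  · exact even1 α 1 1 (9 * α - 64) (three_sq _ (by omega) (by omega)) (by ring) (by norm_num)
  · exact even1 α 1 0 (9 * α - 4) (three_sq _ (by omega) (by omega)) (by ring) (by norm_num)

lemma rep_b4 (α : ℤ) (h0 : 20 ≤ α) : PRep (2 * α) (2 * 2) := by
  by_cases h : α % 4 = 0 ∨ α % 8 = 7
  · exact even1 α 2 1 (9 * α - 46) (three_sq _ (by omega) (by omega)) (by ring) (by norm_num)
  · exact even1 α 2 0 (9 * α - 16) (three_sq _ (by omega) (by omega)) (by ring) (by norm_num)

lemma rep_b6 (α : ℤ) (h0 : 24 ≤ α) : PRep (2 * α) (2 * 3) := by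
  by_cases h7 : α % 8 = 7
  · by_cases hs : α < 204
    · obtain ⟨k, hk⟩ : ∃ k : ℕ, α = 8 * (k : ℤ) + 7 := ⟨(α / 8).toNat, by omega⟩
      rw [hk]; exact rep_six7 k (by omega)
    · exact even0 α 3 5 (α - 204) (three_sq _ (by omega) (by omega)) (by ring) (by norm_num)
  by_cases h4 : α % 4 = 0
  · by_cases hs : α < 204
    · obtain ⟨k, hk⟩ : ∃ k : ℕ, α = 4 * ((k : ℤ) + 1) := ⟨(α / 4 - 1).toNat, by omega⟩
      rw [hk]; exact rep_six4 k (by omega)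
    obtain ⟨γ, hγ⟩ : ∃ γ, α = 4 * γ := ⟨α / 4, by omega⟩
    by_cases h2 : γ % 8 = 2
    · by_cases hs : α < 564
      · obtain ⟨k, hk⟩ : ∃ k : ℕ, α = 32 * (k : ℤ) + 8 := ⟨(α / 32).toNat, by omega⟩
        rw [hk]; exact rep_six8 k (by omega)
      · exact even0 α 3 8 (4 * (γ - 141)) (Sq3.four (three_sq _ (by omega) (by omega)))
          (by rw [hγ]; ring) (by norm_num)
    by_cases h5 : γ % 8 = 5 ∨ γ % 2 = 0
    · exact even0 α 3 5 (4 * (γ - 51)) (Sq3.four (three_sq _ (by omega) (by omega)))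
        (by rw [hγ]; ring) (by norm_num)
    · exact even0 α 3 2 (4 * (γ - 6)) (Sq3.four (three_sq _ (by omega) (by omega)))
        (by rw [hγ]; ring) (by norm_num)
  exact even0 α 3 2 (α - 24) (three_sq _ (by omega) (by omega)) (by ring) (by norm_num)

lemma pair_half (A B : ℤ) (hA : 0 ≤ A) (hB : -1 ≤ B) (hB6 : B ≤ 6) (h : 0 ≤ B ∨ 1 ≤ A) :
    PRep (2 * A + B) B := by
  by_cases hA0 : A = 0
  · subst hA0
    have hB0 : 0 ≤ B := by omega
    interval_cases B
    · exact ⟨0, 0, 0, 0, 0, by norm_num, by norm_num⟩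
    · exact ⟨1, 0, 0, 0, 0, by norm_num, by norm_num⟩
    · exact ⟨0, 0, 1, 0, 0, by norm_num, by norm_num⟩
    · exact ⟨0, 0, 0, 1, 0, by norm_num, by norm_num⟩
    · exact ⟨1, 0, 0, 1, 0, by norm_num, by norm_num⟩
    · exact ⟨0, 0, 0, 0, 1, by norm_num, by norm_num⟩
    · exact ⟨1, 0, 0, 0, 1, by norm_num, by norm_num⟩
  by_cases hA20 : A ≤ 20
  · have := rep_small ((A - 1) * 8 + (B + 1)).toNat (by omega)
    have h1 : ((((A - 1) * 8 + (B + 1)).toNat % 8 : ℕ) : ℤ) - 1 = B := by omega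
    have h2 : ((((A - 1) * 8 + (B + 1)).toNat / 8 : ℕ) : ℤ) + 1 = A := by omega
    rwa [h1, h2] at this
  interval_cases B
  · exact odd_case1 _ _ (by norm_num) (by norm_num) (by omega) (by omega)
  · have := rep_b0 A hA
    convert this using 1 <;> ring
  · exact odd_case1 _ _ (by norm_num) (by norm_num) (by omega) (by omega)
  · have := rep_b2 (A + 1) (by omega)
    convert this using 1 <;> ring
  · exact odd_case3 _ (by omega) (by omega)
  · have := rep_b4 (A + 2) (by omega)
    convert this using 1 <;> ring
  · exact odd_case1 _ _ (by norm_num) (by norm_num) (by omega) (by omega)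
  · have := rep_b6 (A + 3) (by omega)
    convert this using 1 <;> ring

lemma pair5 (A B : ℤ) (hA : 0 ≤ A) (hB : -1 ≤ B) (hB6 : B ≤ 12) (h : 0 ≤ B ∨ 1 ≤ A) :
    PRep (2 * A + B) B := by
  by_cases h6 : B ≤ 6
  · exact pair_half A B hA hB h6 h
  · obtain ⟨x1, x2, x3, x4, x5, h1, h2⟩ := pair_half A (12 - B) hA (by omega) (by omega) (by omega)
    exact ⟨1 - x1, 1 - x2, 1 - x3, 1 - x4, 1 - x5, by linarith, by linarith⟩

lemma pairN (n : ℕ) (hn : 5 ≤ n) : ∀ A B : ℤ, 0 ≤ A → -1 ≤ B →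
    B ≤ ∑ k ∈ Finset.range n, (Nat.fib (k + 1) : ℤ) → (0 ≤ B ∨ 1 ≤ A) →
    ∃ x : ℕ → ℤ, ∑ k ∈ Finset.range n, (Nat.fib (k + 1) : ℤ) * x k = B ∧
      ∑ k ∈ Finset.range n, (Nat.fib (k + 1) : ℤ) * x k ^ 2 = 2 * A + B := by
  induction n, hn using Nat.le_induction with
  | base =>
    intro A B hA hB hBS h
    have hS : ∑ k ∈ Finset.range 5, (Nat.fib (k + 1) : ℤ) = 12 := by decide
    obtain ⟨x1, x2, x3, x4, x5, h1, h2⟩ := pair5 A B hA hB (by omega) h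
    refine ⟨fun k => if k = 0 then x1 else if k = 1 then x2 else if k = 2 then x3
      else if k = 3 then x4 else x5, ?_, ?_⟩
    · simp [Finset.sum_range_succ, Nat.fib_add_two]
      linarith
    · simp [Finset.sum_range_succ, Nat.fib_add_two]
      linarith
  | succ n hn ih =>
    intro A B hA hB hBS h
    by_cases hle : B ≤ ∑ k ∈ Finset.range n, (Nat.fib (k + 1) : ℤ)
    · obtain ⟨x, h1, h2⟩ := ih A B hA hB hle h
      refine ⟨fun k => if k < n then x k else 0, ?_, ?_⟩
      · rw [Finset.sum_range_succ, ← h1]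
        simp only [lt_irrefl, if_false, mul_zero, add_zero]
        exact Finset.sum_congr rfl fun k hk => by rw [if_pos (Finset.mem_range.1 hk)]
      · rw [Finset.sum_range_succ, ← h2]
        simp only [lt_irrefl, if_false]
        norm_num
        exact Finset.sum_congr rfl fun k hk => by rw [if_pos (Finset.mem_range.1 hk)]
    · have hsum : (∑ k ∈ Finset.range n, (Nat.fib (k + 1) : ℤ)) + 1 = Nat.fib (n + 2) := by
        clear * -
        induction n with
        | zero => simp
        | succ n ih =>
          rw [Finset.sum_range_succ, Nat.fib_add_two (n := n + 1)]
          push_cast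
          linarith
      have hf : (Nat.fib (n + 2) : ℤ) = Nat.fib n + Nat.fib (n + 1) := by
        rw [Nat.fib_add_two]; push_cast; ring
      rw [Finset.sum_range_succ] at hBS
      have hp : (0 : ℤ) ≤ Nat.fib n := by positivity
      obtain ⟨x, h1, h2⟩ := ih A (B - Nat.fib (n + 1)) hA (by omega) (by omega) (by omega)
      refine ⟨fun k => if k < n then x k else 1, ?_, ?_⟩
      · rw [Finset.sum_range_succ]
        simp only [lt_irrefl, if_false]
        rw [Finset.sum_congr rfl (fun k hk => by rw [if_pos (Finset.mem_range.1 hk)]), h1]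
        ring
      · rw [Finset.sum_range_succ]
        simp only [lt_irrefl, if_false]
        rw [Finset.sum_congr rfl (fun k hk => by rw [if_pos (Finset.mem_range.1 hk)]), h2]
        ring

theorem fibonacci_polygonal_universal (m : ℤ) (hm : 3 ≤ m) (n : ℕ) (hn : 5 ≤ n)
    (hsum : m - 4 ≤ ∑ k ∈ Finset.range n, (Nat.fib (k + 1) : ℤ)) :
    ∀ N : ℤ, 0 < N →
      ∃ x : Fin n → ℤ,
        ∑ k : Fin n, (Nat.fib ((k : ℕ) + 1) : ℤ) * polygonal m (x k) = N := by
  intro N hN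
  have hm2 : 0 < m - 2 := by omega
  have h1 := Int.emod_nonneg (N + 1) hm2.ne'
  have h2 := Int.emod_lt_of_pos (N + 1) hm2
  have h3 := Int.mul_ediv_add_emod (N + 1) (m - 2)
  have h4 : 0 ≤ (N + 1) / (m - 2) := Int.ediv_nonneg (by omega) hm2.le
  obtain ⟨A, hA⟩ : ∃ A, A = (N + 1) / (m - 2) := ⟨_, rfl⟩
  obtain ⟨B, hB⟩ : ∃ B, B = (N + 1) % (m - 2) - 1 := ⟨_, rfl⟩
  rw [← hA] at h3 h4
  have hNAB : N = (m - 2) * A + B := by rw [hB]; linarith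
  have hor : 0 ≤ B ∨ 1 ≤ A := by
    by_cases h0 : A = 0
    · left
      rw [h0, mul_zero, zero_add] at hNAB
      omega
    · right; omega
  obtain ⟨x, hx1, hx2⟩ := pairN n hn A B h4 (by omega) (by omega) hor
  refine ⟨fun k => x k, ?_⟩
  rw [Fin.sum_univ_eq_sum_range (fun k => (Nat.fib (k + 1) : ℤ) * polygonal m (x k)) n]
  have h5 : 2 * ∑ k ∈ Finset.range n, (Nat.fib (k + 1) : ℤ) * polygonal m (x k) =
      (m - 2) * (∑ k ∈ Finset.range n, (Nat.fib (k + 1) : ℤ) * x k ^ 2 -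
        ∑ k ∈ Finset.range n, (Nat.fib (k + 1) : ℤ) * x k) +
      2 * ∑ k ∈ Finset.range n, (Nat.fib (k + 1) : ℤ) * x k := by
    rw [← Finset.sum_sub_distrib, Finset.mul_sum, Finset.mul_sum, Finset.mul_sum,
      ← Finset.sum_add_distrib]
    refine Finset.sum_congr rfl fun k _ => ?_
    have := two_polygonal m (x k)
    linear_combination (Nat.fib (k + 1) : ℤ) * this
  rw [hx1, hx2] at h5
  have : 2 * ∑ k ∈ Finset.range n, (Nat.fib (k + 1) : ℤ) * polygonal m (x k) = 2 * N := by
    rw [h5, hNAB]; ring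
  linarith
end
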